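/- Let u, w ∈ [1,γ] \ {1} and let A, B ∈ Γ₊. If A·⟨u⟩ = B·⟨w⟩ in Γ₊, then there exist e, f ∈ [1,γ] and C ∈ Γ₊ such that A = C·⟨e⟩ and B = C·⟨f⟩ in Γ₊ (where ⟨1⟩ is interpreted as the identity of Γ₊), eu = fw, and eu is a least upper bound of {u,w} in ([1,γ],≤). -/

import Mathlib

/-!
The interval `[1, γ]` has binary meets, and this is what makes the positive monoid a Garside-like
monoid.

*Meets.* Let `W` act on `ℝ^S` by the geometric representation, with an invariant inner product
obtained by averaging and the root system `Φ` of unit vectors. Ordering the simple roots as in the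
product defining `γ`, let `χ` be the form which is triangular on the simple roots and whose
symmetrisation is twice the inner product (`NCLattice.euler`). A list of roots is *exceptional* if
`χ a b = 0` for `a` before `b`. The product of the reflections of an exceptional sequence depends
only on its span (`NCLattice.wall`), a factorisation of `γ` into the least number of reflections is
an exceptional sequence (`FullStr.exc_of_factor`), and every exceptional sequence extends to one
whose product is `γ` (`FullStr.complete_top`). Hence `[1, γ]` is the set of spans of exceptional
sequences of roots, ordered by inclusion (`Model.rle_iff`).

Each such span has a *simple* exceptional sequence, i.e. one which is a simple system for the roots
in the span (`Str`). Rotating it (`rot`) gives again a simple exceptional sequence, and every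
non-zero vector leaves the cone after finitely many rotations (`exists_exit`), because the product
of the reflections has finite order and no fixed vector. Induction on the number of rotations shows
that a vector of the positive cone has an expansion as a positive combination of an exceptional
sequence of positive roots with non-negative off-diagonal values of `χ` (`exists_expansion`), and
ordering the positive roots by this number shows that it is unique (`expansion_unique`). Given two exceptional spans, a generic positive
combination of the positive roots in their intersection has the same expansion in both, so the
roots in the intersection span an exceptional span (`FullStr.meet`): this is the meet.

*The monoid.* With meets, for `r` and `a` in `[1, γ]` there is a largest `d ≤ r` such that `d a`
lies in `[1, γ]` with additive length. Sending `(Q, r)` to `(Q ⟨r d⁻¹⟩, d a)` respects the defining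
relations (`step_mul`), so `Γ₊` acts on the right on the set `Γ₊ × [1, γ]`; the image `(Q, r)` of
`(1, 1)` under `X` satisfies `Q ⟨r⟩ = X` (`nf_eval`). If `X ⟨u⟩ = Y ⟨w⟩`, comparing the two images
gives one `Q` and elements `d₁, d₂` with `X = Q ⟨d₁⟩`, `Y = Q ⟨d₂⟩` and `d₁ u = d₂ w`. The least
upper bound of `u` and `w`, which exists below this common upper bound, then splits off.
-/

variable {B : Type*} {W : Type*} [Group W] {M : CoxeterMatrix B}

/-- The reflection length of `w`: the least `k` such that `w` is a product of `k`
reflections (conjugates of simple reflections). -/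
noncomputable def rlen (cs : CoxeterSystem M W) (w : W) : ℕ :=
  sInf {k | ∃ l : List W, (∀ t ∈ l, cs.IsReflection t) ∧ l.length = k ∧ l.prod = w}

/-- The reflection (absolute) order on `W`: `u ≤ w` iff `ℓ(w) = ℓ(u) + ℓ(u⁻¹w)`. -/
def rle (cs : CoxeterSystem M W) (u w : W) : Prop :=
  rlen cs w = rlen cs u + rlen cs (u⁻¹ * w)

/-- A Coxeter element: a conjugate of a product of all the simple reflections,
each occurring exactly once, in some order. -/
def IsCoxeterElement [Fintype B] (cs : CoxeterSystem M W) (γ : W) : Prop :=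
  ∃ (v : W) (l : List B), l.Nodup ∧ (∀ i : B, i ∈ l) ∧ γ = v * cs.wordProd l * v⁻¹

/-- `p` is a least upper bound of the set `s` within the interval `[1,γ]`
under the reflection order. -/
def IsIntervalLUB (cs : CoxeterSystem M W) (γ : W) (s : Set W) (p : W) : Prop :=
  rle cs p γ ∧ (∀ x ∈ s, rle cs x p) ∧
    ∀ r, rle cs r γ → (∀ x ∈ s, rle cs x r) → rle cs p r

/-- The generating set of the poset group/monoid: the interval `[1,γ]` minus the identity. -/
abbrev NCGen (cs : CoxeterSystem M W) (γ : W) : Type _ :=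
  {w : W // w ≠ 1 ∧ rle cs w γ}

/-- The defining relations of the positive monoid `Γ₊(W,γ)`:
`⟨w₁⟩⟨w₂⟩ = ⟨w₃⟩` whenever `w₁w₂ = w₃` in `W` and `ℓ(w₁) + ℓ(w₂) = ℓ(w₃)`. -/
def posRels (cs : CoxeterSystem M W) (γ : W) :
    FreeMonoid (NCGen cs γ) → FreeMonoid (NCGen cs γ) → Prop :=
  fun x y => ∃ w₁ w₂ w₃ : NCGen cs γ,
    x = FreeMonoid.of w₁ * FreeMonoid.of w₂ ∧ y = FreeMonoid.of w₃ ∧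
    (w₁ : W) * (w₂ : W) = (w₃ : W) ∧
    rlen cs (w₁ : W) + rlen cs (w₂ : W) = rlen cs (w₃ : W)

/-- The positive monoid `Γ₊(W,γ)`, presented by the generators `⟨w⟩`, `w ∈ [1,γ] \ {1}`,
and the relations `posRels`. -/
abbrev PosMonoid (cs : CoxeterSystem M W) (γ : W) := PresentedMonoid (posRels cs γ)

open Classical in
/-- The generator `⟨w⟩` of `Γ₊(W,γ)` for `w ∈ [1,γ]`, interpreting `⟨1⟩` as the
identity of the monoid (and defaulting to the identity off the interval). -/
noncomputable def pgen (cs : CoxeterSystem M W) (γ : W) (w : W) : PosMonoid cs γ :=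
  if h : w ≠ 1 ∧ rle cs w γ then PresentedMonoid.of (posRels cs γ) ⟨w, h⟩ else 1

namespace NCLattice

open scoped NNReal

section Geometry

variable {V : Type*} [AddCommGroup V] [Module ℝ V]

/-- The reflection `x ↦ x - (χ a x + χ x a) a` in a vector `a` with `χ a a = 1`, for the
symmetric form obtained by symmetrising the (non-symmetric) bilinear form `χ`. -/
noncomputable def rf (χ : V →ₗ[ℝ] V →ₗ[ℝ] ℝ) (a : V) : V →ₗ[ℝ] V :=
  LinearMap.id - (χ a + χ.flip a).smulRight a

/-- The product of the reflections in the members of a list of vectors. -/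
noncomputable def wl (χ : V →ₗ[ℝ] V →ₗ[ℝ] ℝ) (l : List V) : Module.End ℝ V :=
  (l.map (rf χ)).prod

/-- The closed convex cone generated by the members of a list. -/
def cone (l : List V) : Submodule ℝ≥0 V := Submodule.span ℝ≥0 {x | x ∈ l}

/-- The real span of the members of a list. -/
def lspan (l : List V) : Submodule ℝ V := Submodule.span ℝ {x | x ∈ l}

/-- A finite root system `Φ` of unit vectors for the symmetrisation of a positive bilinear
form `χ`, such that products of reflections have finite order. -/
structure IsRootDatum (χ : V →ₗ[ℝ] V →ₗ[ℝ] ℝ) (Φ : Set V) : Prop where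
  pos : ∀ x, x ≠ 0 → 0 < χ x x
  unit : ∀ x ∈ Φ, χ x x = 1
  finite : Φ.Finite
  rf_mem : ∀ a ∈ Φ, ∀ x ∈ Φ, rf χ a x ∈ Φ
  finite_order : ∀ l : List V, (∀ a ∈ l, a ∈ Φ) → ∃ h, 0 < h ∧ wl χ l ^ h = 1

/-- An exceptional sequence: `χ a b = 0` whenever `a` comes before `b`. -/
def Exc (χ : V →ₗ[ℝ] V →ₗ[ℝ] ℝ) (l : List V) : Prop := l.Pairwise fun a b => χ a b = 0

/-- A simple exceptional sequence: the list `l` of roots is exceptional with non-positive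
off-diagonal values of `χ`, and every root in its span is a non-negative or a non-positive
combination of `l`; so `l` is a simple system of the root system `Φ ∩ lspan l`. -/
structure Str (χ : V →ₗ[ℝ] V →ₗ[ℝ] ℝ) (Φ : Set V) (l : List V) : Prop where
  mem : ∀ a ∈ l, a ∈ Φ
  pw : l.Pairwise fun a b => χ a b = 0 ∧ χ b a ≤ 0
  coh : ∀ x ∈ Φ, x ∈ lspan l → x ∈ cone l ∨ -x ∈ cone l

variable {χ : V →ₗ[ℝ] V →ₗ[ℝ] ℝ} {Φ : Set V}

theorem rf_apply (a x : V) : rf χ a x = x - (χ a x + χ x a) • a := by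
  simp [rf]

theorem wl_nil : wl χ [] = 1 := rfl

theorem wl_cons (a : V) (l : List V) : wl χ (a :: l) = rf χ a * wl χ l := by
  simp [wl]

theorem wl_append (l l' : List V) : wl χ (l ++ l') = wl χ l * wl χ l' := by
  simp [wl]

theorem rf_self {a : V} (ha : χ a a = 1) : rf χ a a = -a := by
  rw [rf_apply, ha]; module

theorem rf_rf {a : V} (ha : χ a a = 1) (x : V) : rf χ a (rf χ a x) = x := by
  simp only [rf_apply, map_sub, map_smul, ha]
  module

theorem rf_mul_rf {a : V} (ha : χ a a = 1) : rf χ a * rf χ a = 1 := by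
  ext x; exact rf_rf ha x

theorem rf_form {a : V} (ha : χ a a = 1) (x y : V) :
    χ (rf χ a x) (rf χ a y) + χ (rf χ a y) (rf χ a x) = χ x y + χ y x := by
  simp only [rf_apply, map_sub, map_smul, LinearMap.sub_apply, LinearMap.smul_apply, ha,
    smul_eq_mul]
  ring

/-- Conjugating a reflection by an isometry of the symmetrised form. -/
theorem rf_conj {g : Module.End ℝ V}
    (hg : ∀ x y, χ (g x) (g y) + χ (g y) (g x) = χ x y + χ y x) (a x : V) :
    rf χ (g a) (g x) = g (rf χ a x) := by
  rw [rf_apply, rf_apply, hg, map_sub, map_smul]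

theorem wl_form {l : List V} (hl : ∀ a ∈ l, χ a a = 1) (x y : V) :
    χ (wl χ l x) (wl χ l y) + χ (wl χ l y) (wl χ l x) = χ x y + χ y x := by
  induction l with
  | nil => simp [wl_nil]
  | cons a l ih =>
    simp only [List.mem_cons, forall_eq_or_imp] at hl
    simp only [wl_cons, Module.End.mul_apply]
    rw [rf_form hl.1, ih hl.2]

theorem wl_map_conj {g : Module.End ℝ V}
    (hg : ∀ x y, χ (g x) (g y) + χ (g y) (g x) = χ x y + χ y x) (l : List V) :
    wl χ (l.map g) * g = g * wl χ l := by
  induction l with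
  | nil => simp [wl_nil]
  | cons a l ih =>
    rw [List.map_cons, wl_cons, wl_cons, mul_assoc, ih]
    ext x
    simp [rf_conj hg]

/-! ### Cones -/

theorem cone_le_lspan {l : List V} {x : V} (hx : x ∈ cone l) : x ∈ lspan l := by
  induction hx using Submodule.span_induction with
  | mem x h => exact Submodule.subset_span h
  | zero => exact zero_mem _
  | add x y _ _ hx hy => exact add_mem hx hy
  | smul c x _ hx => exact (lspan l).smul_mem (c : ℝ) hx

theorem mem_cone {l : List V} {x : V} (hx : x ∈ l) : x ∈ cone l := Submodule.subset_span hx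

theorem mem_lspan {l : List V} {x : V} (hx : x ∈ l) : x ∈ lspan l := Submodule.subset_span hx

theorem cone_smul {l : List V} {c : ℝ} (hc : 0 ≤ c) {x : V} (hx : x ∈ cone l) :
    c • x ∈ cone l := (cone l).smul_mem ⟨c, hc⟩ hx

theorem cone_nonneg {l : List V} {f : V →ₗ[ℝ] ℝ} (hf : ∀ a ∈ l, 0 ≤ f a) {x : V}
    (hx : x ∈ cone l) : 0 ≤ f x := by
  induction hx using Submodule.span_induction with
  | mem x h => exact hf x h
  | zero => simp
  | add x y _ _ hx hy => rw [map_add]; exact add_nonneg hx hy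
  | smul c x _ hx =>
    have : c • x = (c : ℝ) • x := rfl
    rw [this, map_smul]; exact mul_nonneg c.2 hx

theorem lspan_zero {l : List V} {f : V →ₗ[ℝ] ℝ} (hf : ∀ a ∈ l, f a = 0) {x : V}
    (hx : x ∈ lspan l) : f x = 0 := by
  have : lspan l ≤ LinearMap.ker f := Submodule.span_le.2 fun a ha => hf a ha
  exact this hx

theorem cone_map {l : List V} (g : V →ₗ[ℝ] V) {x : V} (hx : x ∈ cone l) :
    g x ∈ cone (l.map g) := by
  induction hx using Submodule.span_induction with
  | mem x h => exact mem_cone (List.mem_map_of_mem h)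
  | zero => simp
  | add x y _ _ hx hy => rw [map_add]; exact add_mem hx hy
  | smul c x _ hx =>
    have : c • x = (c : ℝ) • x := rfl
    rw [this, map_smul]; exact cone_smul c.2 hx

theorem cone_subset {l l' : List V} (h : ∀ a ∈ l, a ∈ cone l') {x : V} (hx : x ∈ cone l) :
    x ∈ cone l' := (Submodule.span_le.2 h : cone l ≤ cone l') hx

theorem lspan_subset {l l' : List V} (h : ∀ a ∈ l, a ∈ lspan l') {x : V} (hx : x ∈ lspan l) :
    x ∈ lspan l' := (Submodule.span_le.2 h : lspan l ≤ lspan l') hx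

theorem mem_cone_cons {a x : V} {l : List V} :
    x ∈ cone (a :: l) ↔ ∃ c : ℝ, 0 ≤ c ∧ ∃ y ∈ cone l, x = c • a + y := by
  have : {x | x ∈ a :: l} = insert a {x | x ∈ l} := by ext; simp
  rw [cone, this, Submodule.mem_span_insert]
  constructor
  · rintro ⟨c, z, hz, rfl⟩; exact ⟨c, c.2, z, hz, rfl⟩
  · rintro ⟨c, hc, z, hz, rfl⟩; exact ⟨⟨c, hc⟩, z, hz, rfl⟩

theorem mem_lspan_cons {a x : V} {l : List V} :
    x ∈ lspan (a :: l) ↔ ∃ c : ℝ, ∃ y ∈ lspan l, x = c • a + y := by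
  have : {x | x ∈ a :: l} = insert a {x | x ∈ l} := by ext; simp
  rw [lspan, this, Submodule.mem_span_insert]; rfl

theorem lspan_map_rf {a : V} {l : List V} (ha : a ∈ l) :
    lspan (l.map (rf χ a)) ≤ lspan l := by
  refine Submodule.span_le.2 fun x hx => ?_
  obtain ⟨b, hb, rfl⟩ := List.mem_map.1 hx
  rw [rf_apply]
  exact sub_mem (mem_lspan hb) ((lspan l).smul_mem _ (mem_lspan ha))

theorem rf_mem_lspan {a x : V} {l : List V} (ha : a ∈ lspan l) (hx : x ∈ lspan l) :
    rf χ a x ∈ lspan l := by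
  rw [rf_apply]
  exact sub_mem hx ((lspan l).smul_mem _ ha)

namespace IsRootDatum

theorem ne_zero (hR : IsRootDatum χ Φ) {x : V} (hx : x ∈ Φ) : x ≠ 0 := by
  rintro rfl
  simpa using hR.unit 0 hx

theorem neg_mem (hR : IsRootDatum χ Φ) {x : V} (hx : x ∈ Φ) : -x ∈ Φ := by
  have := hR.rf_mem x hx x hx
  rwa [rf_self (hR.unit x hx)] at this

theorem eq_zero (hR : IsRootDatum χ Φ) {x : V} (hx : χ x x = 0) : x = 0 := by
  by_contra h
  exact (hR.pos x h).ne' hx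

end IsRootDatum

theorem pointed {l : List V} (hu : ∀ a ∈ l, χ a a = 1) (he : Exc χ l) {y y' : V}
    (hy : y ∈ cone l) (hy' : y' ∈ cone l) (h : y + y' = 0) : y = 0 := by
  induction l generalizing y y' with
  | nil => simpa [cone] using hy
  | cons a l ih =>
    obtain ⟨c, hc, z, hz, rfl⟩ := mem_cone_cons.1 hy
    obtain ⟨c', hc', z', hz', rfl⟩ := mem_cone_cons.1 hy'
    rw [Exc, List.pairwise_cons] at he
    simp only [List.mem_cons, forall_eq_or_imp] at hu
    have h1 : χ a z = 0 := lspan_zero he.1 (cone_le_lspan hz)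
    have h2 : χ a z' = 0 := lspan_zero he.1 (cone_le_lspan hz')
    have h3 := congrArg (χ a) h
    simp only [map_add, map_smul, hu.1, h1, h2, smul_eq_mul, map_zero] at h3
    have hc0 : c = 0 := by linarith
    have hc0' : c' = 0 := by linarith
    subst hc0 hc0'
    simp only [zero_smul, zero_add] at h ⊢
    exact ih hu.2 he.2 hz hz' h

/-! ### Wall's parametrisation -/

theorem sub_wl_mem (l : List V) (x : V) : x - wl χ l x ∈ lspan l := by
  induction l with
  | nil => simp [wl_nil]
  | cons a l ih =>
    rw [wl_cons, Module.End.mul_apply, rf_apply]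
    have h1 : x - wl χ l x ∈ lspan (a :: l) :=
      lspan_subset (fun b hb => mem_lspan (List.mem_cons_of_mem _ hb)) ih
    have h2 := (lspan (a :: l)).smul_mem (χ a (wl χ l x) + χ (wl χ l x) a)
      (mem_lspan (List.mem_cons_self (a := a) (l := l)))
    convert add_mem h1 h2 using 1
    abel

/-- The product `w` of the reflections in an exceptional sequence satisfies
`χ (x - w x) y = χ x y + χ y x` for `y` in its span; in particular it only depends on the span. -/
theorem wall {l : List V} (hu : ∀ a ∈ l, χ a a = 1) (he : Exc χ l) (x : V) {y : V}
    (hy : y ∈ lspan l) : χ (x - wl χ l x) y = χ x y + χ y x := by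
  induction l generalizing y with
  | nil =>
    have : y = 0 := by simpa [lspan] using hy
    simp [this]
  | cons a l ih =>
    rw [Exc, List.pairwise_cons] at he
    simp only [List.mem_cons, forall_eq_or_imp] at hu
    obtain ⟨c, z, hz, rfl⟩ := mem_lspan_cons.1 hy
    have h1 := ih hu.2 he.2 hz
    have h2 : χ a z = 0 := lspan_zero he.1 hz
    have h3 : χ a (x - wl χ l x) = 0 := lspan_zero he.1 (sub_wl_mem l x)
    simp only [wl_cons, Module.End.mul_apply, rf_apply, map_sub, map_add, map_smul,
      LinearMap.sub_apply, LinearMap.add_apply, LinearMap.smul_apply, smul_eq_mul, h2, hu.1] at *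
    linear_combination h1 - c * h3

theorem wl_eq_of_lspan (hR : IsRootDatum χ Φ) {l l' : List V} (hl : ∀ a ∈ l, a ∈ Φ)
    (hl' : ∀ a ∈ l', a ∈ Φ) (he : Exc χ l) (he' : Exc χ l') (h : lspan l = lspan l') :
    wl χ l = wl χ l' := by
  ext x
  have hd : wl χ l' x - wl χ l x ∈ lspan l := by
    have h1 := sub_wl_mem (χ := χ) l x
    have h2 := sub_wl_mem (χ := χ) l' x
    rw [← h] at h2
    convert sub_mem h1 h2 using 1
    abel
  have h1 := wall (fun a ha => hR.unit a (hl a ha)) he x hd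
  have h2 := wall (fun a ha => hR.unit a (hl' a ha)) he' x (h ▸ hd)
  have h3 : χ (wl χ l' x - wl χ l x) (wl χ l' x - wl χ l x) = 0 := by
    have h4 : χ (wl χ l' x - wl χ l x) (wl χ l' x - wl χ l x) =
        χ (x - wl χ l x) (wl χ l' x - wl χ l x) - χ (x - wl χ l' x) (wl χ l' x - wl χ l x) := by
      simp only [map_sub, LinearMap.sub_apply]; ring
    rw [h4, h1, h2, sub_self]
  exact (sub_eq_zero.1 (hR.eq_zero h3)).symm

/-! ### Rotation of simple exceptional sequences -/

/-- Rotation `(a₁, …, aₖ) ↦ (s a₂, …, s aₖ, -a₁)` with `s` the reflection in `a₁`. -/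
noncomputable def rot (χ : V →ₗ[ℝ] V →ₗ[ℝ] ℝ) : List V → List V
  | [] => []
  | a :: l => (l ++ [a]).map (rf χ a)

theorem rot_cons (a : V) (l : List V) : rot χ (a :: l) = (l ++ [a]).map (rf χ a) := rfl

theorem Str.unit (hR : IsRootDatum χ Φ) {l : List V} (hS : Str χ Φ l) :
    ∀ a ∈ l, χ a a = 1 := fun a ha => hR.unit a (hS.mem a ha)

theorem Str.exc {l : List V} (hS : Str χ Φ l) : Exc χ l := hS.pw.imp fun h => h.1

/-- Reflecting a simple system in one of its members preserves coherence of signs. -/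
theorem coh_reflect (hR : IsRootDatum χ Φ) {l l' : List V} {a : V} (ha : a ∈ l)
    (hS : Str χ Φ l) (hl' : ∀ x, x ∈ l' ↔ x ∈ l.map (rf χ a)) (x : V) (hx : x ∈ Φ)
    (hxl : x ∈ lspan l') : x ∈ cone l' ∨ -x ∈ cone l' := by
  have hu := hR.unit a (hS.mem a ha)
  have hxl2 : x ∈ lspan l := lspan_map_rf ha (lspan_subset (fun b hb =>
    mem_lspan ((hl' b).1 hb)) hxl)
  have key : ∀ y, rf χ a y ∈ cone l → y ∈ cone l' := fun y hy => by
    have := cone_map (rf χ a) hy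
    rw [rf_rf hu] at this
    exact cone_subset (fun b hb => mem_cone ((hl' b).2 hb)) this
  rcases hS.coh _ (hR.rf_mem a (hS.mem a ha) x hx) (rf_mem_lspan (mem_lspan ha) hxl2) with h | h
  · exact Or.inl (key x h)
  · refine Or.inr (key _ ?_)
    rwa [map_neg]

theorem Str.rotate (hR : IsRootDatum χ Φ) {l : List V} (hS : Str χ Φ l) : Str χ Φ (rot χ l) := by
  cases l with
  | nil => exact hS
  | cons a l =>
    have hu := hR.unit a (hS.mem a (by simp))
    have hpw := hS.pw
    rw [List.pairwise_cons] at hpw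
    refine ⟨?_, ?_, ?_⟩
    · intro b hb
      obtain ⟨c, hc, rfl⟩ := List.mem_map.1 hb
      refine hR.rf_mem a (hS.mem a (by simp)) c (hS.mem c ?_)
      simpa [or_comm] using hc
    · rw [rot_cons, List.map_append, List.pairwise_append]
      refine ⟨?_, by simp, ?_⟩
      · rw [List.pairwise_map]
        refine List.Pairwise.imp_of_mem ?_ hpw.2
        intro b c hb hc h
        have h1 := (hpw.1 b hb).1
        have h2 := (hpw.1 c hc).1
        have e1 : χ (rf χ a b) (rf χ a c) = χ b c := by
          simp only [rf_apply, map_sub, map_smul, LinearMap.sub_apply, LinearMap.smul_apply, hu,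
            h1, h2, smul_eq_mul]; ring
        have e2 : χ (rf χ a c) (rf χ a b) = χ c b := by
          simp only [rf_apply, map_sub, map_smul, LinearMap.sub_apply, LinearMap.smul_apply, hu,
            h1, h2, smul_eq_mul]; ring
        rw [e1, e2]; exact h
      · intro x hx y hy
        obtain ⟨b, hb, rfl⟩ := List.mem_map.1 hx
        simp only [List.map_cons, List.map_nil, List.mem_singleton] at hy
        subst hy
        have h1 := hpw.1 b hb
        rw [rf_self hu]
        simp only [rf_apply, map_sub, map_smul, map_neg, LinearMap.neg_apply, LinearMap.sub_apply,
          LinearMap.smul_apply, hu, h1.1, smul_eq_mul]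
        constructor
        · ring
        · linarith [h1.2]
    · refine coh_reflect hR (a := a) (l := a :: l) (by simp) hS ?_
      intro x
      simp [rot_cons, or_comm]

theorem cone_rot_cons {a : V} {l : List V} (ha : χ a a = 1) {x : V} :
    x ∈ cone (rot χ (a :: l)) ↔ rf χ a x ∈ cone (a :: l) := by
  constructor
  · intro h
    have := cone_map (rf χ a) h
    refine cone_subset ?_ this
    intro b hb
    simp only [rot_cons, List.map_map, List.mem_map, Function.comp] at hb
    obtain ⟨c, hc, rfl⟩ := hb
    rw [rf_rf ha]
    exact mem_cone (by simpa [or_comm] using hc)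
  · intro h
    have := cone_map (rf χ a) h
    rw [rf_rf ha] at this
    refine cone_subset ?_ this
    intro b hb
    refine mem_cone ?_
    simpa [rot_cons, or_comm] using hb

theorem lspan_rot (hR : IsRootDatum χ Φ) {l : List V} (hS : Str χ Φ l) :
    lspan (rot χ l) = lspan l := by
  cases l with
  | nil => rfl
  | cons a l =>
    have hu := hR.unit a (hS.mem a (by simp))
    have hle : lspan (rot χ (a :: l)) ≤ lspan (a :: l) := by
      refine le_trans ?_ (lspan_map_rf (χ := χ) (a := a) (l := a :: l) (by simp))
      exact Submodule.span_mono fun x hx => by simpa [rot_cons, or_comm] using hx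
    refine le_antisymm hle (Submodule.span_le.2 fun b hb => ?_)
    have h1 : rf χ a b ∈ lspan (rot χ (a :: l)) := by
      refine mem_lspan (List.mem_map_of_mem ?_)
      simpa [or_comm] using hb
    have h2 : -a ∈ lspan (rot χ (a :: l)) := mem_lspan (by simp [rot_cons, rf_self hu])
    have h3 := rf_mem_lspan (χ := χ) h2 h1
    have h4 : rf χ (-a) (rf χ a b) = b := by
      rw [← rf_rf hu b]
      rw [rf_rf hu, rf_apply (-a), rf_apply a (rf χ a b)]
      simp only [map_neg, LinearMap.neg_apply]; module
    rwa [h4] at h3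

theorem rot_iterate (hR : IsRootDatum χ Φ) (l₁ l₂ : List V) (h : ∀ a ∈ l₁, a ∈ Φ) :
    (rot χ)^[l₁.length] (l₁ ++ l₂) = (l₂ ++ l₁).map (wl χ l₁) := by
  induction hn : l₁.length generalizing l₁ l₂ with
  | zero =>
    have : l₁ = [] := List.length_eq_zero_iff.1 hn
    subst this
    simp only [wl_nil, List.nil_append, List.append_nil]
    exact (List.map_id l₂).symm
  | succ n ih =>
    cases l₁ with
    | nil => simp at hn
    | cons a l =>
      have ha : a ∈ Φ := h a (by simp)
      have hu := hR.unit a ha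
      have key : wl χ (l.map (rf χ a)) * rf χ a = wl χ (a :: l) := by
        rw [wl_map_conj (rf_form hu), wl_cons]
      have := ih (l.map (rf χ a)) ((l₂ ++ [a]).map (rf χ a))
        (by
          intro b hb
          obtain ⟨c, hc, rfl⟩ := List.mem_map.1 hb
          exact hR.rf_mem a ha c (h c (by simp [hc]))) (by simpa using hn)
      rw [Function.iterate_succ_apply, List.cons_append, rot_cons]
      rw [show (l ++ l₂ ++ [a]).map (rf χ a) = l.map (rf χ a) ++ (l₂ ++ [a]).map (rf χ a) by simp,
        this, ← List.map_append, List.map_map, ← key]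
      rw [List.append_assoc]
      rfl

theorem rot_iterate_mul (hR : IsRootDatum χ Φ) (l : List V) (h : ∀ a ∈ l, a ∈ Φ) (k : ℕ) :
    (rot χ)^[l.length * k] l = l.map (wl χ l ^ k) := by
  induction k with
  | zero => exact (List.map_id l).symm
  | succ k ih =>
    rw [Nat.mul_succ, Nat.add_comm, Function.iterate_add_apply, ih]
    have hu : ∀ a ∈ l, χ a a = 1 := fun a ha => hR.unit a (h a ha)
    have hiso : ∀ k x y, χ ((wl χ l ^ k) x) ((wl χ l ^ k) y) +
        χ ((wl χ l ^ k) y) ((wl χ l ^ k) x) = χ x y + χ y x := by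
      intro k
      induction k with
      | zero => simp
      | succ k ih => intro x y; simp only [pow_succ', Module.End.mul_apply]; rw [wl_form hu, ih]
    have hmem : ∀ k, ∀ a ∈ l, (wl χ l ^ k) a ∈ Φ := by
      have h1 : ∀ l' : List V, (∀ a ∈ l', a ∈ Φ) → ∀ x ∈ Φ, wl χ l' x ∈ Φ := by
        intro l' hl' x hx
        induction l' with
        | nil => simpa [wl_nil]
        | cons b l' ih' =>
          rw [wl_cons]
          exact hR.rf_mem b (hl' b (by simp)) _ (ih' fun a ha => hl' a (by simp [ha]))
      intro k
      induction k with
      | zero => simpa using h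
      | succ k ih =>
        intro a ha
        rw [pow_succ']
        exact h1 l h _ (ih a ha)
    have := rot_iterate hR (l.map (wl χ l ^ k)) [] (by
      intro b hb
      obtain ⟨c, hc, rfl⟩ := List.mem_map.1 hb
      exact hmem k c hc)
    rw [List.length_map, List.append_nil, List.nil_append, List.map_map] at this
    rw [this]
    refine List.map_congr_left fun a _ => ?_
    have := congrArg (fun f => f a) (wl_map_conj (hiso k) l)
    simp only [Module.End.mul_apply] at this
    simp only [Function.comp, this, pow_succ, Module.End.mul_apply]

/-- A non-zero vector leaves the cone after finitely many rotations: otherwise the sum of its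
orbit under the product of the reflections would be a non-zero fixed vector of that product. -/
theorem exists_exit (hR : IsRootDatum χ Φ) {l : List V} (hS : Str χ Φ l) {v : V}
    (hv : v ≠ 0) : ∃ j, v ∉ cone ((rot χ)^[j] l) := by
  by_contra hcon
  push Not at hcon
  obtain ⟨h, hh, hw⟩ := hR.finite_order l hS.mem
  set w := wl χ l with hwdef
  have hpow : ∀ j, (w ^ j) v ∈ cone l := by
    intro j
    have h1 := hcon (l.length * (j * (h - 1)))
    rw [rot_iterate_mul hR l hS.mem] at h1
    have h2 := cone_map (w ^ j) h1
    rw [List.map_map] at h2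
    have h3 : (⇑(w ^ j) ∘ ⇑(wl χ l ^ (j * (h - 1)))) = id := by
      funext x
      have : w ^ j * w ^ (j * (h - 1)) = 1 := by
        rw [← pow_add, show j + j * (h - 1) = h * j by
          obtain ⟨k, rfl⟩ : ∃ k, h = k + 1 := ⟨h - 1, by omega⟩
          simp; ring, pow_mul, hw, one_pow]
      simpa using congrArg (fun f => f x) this
    rw [h3, List.map_id] at h2
    exact h2
  set x := ∑ j ∈ Finset.range h, (w ^ j) v with hx
  have hfix : w x = x := by
    have h1 : w x = ∑ j ∈ Finset.range h, (w ^ (j + 1)) v := by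
      rw [hx, map_sum]
      refine Finset.sum_congr rfl fun j _ => ?_
      rw [pow_succ', Module.End.mul_apply]
    have h2 := Finset.sum_range_succ (fun j => (w ^ j) v) h
    rw [Finset.sum_range_succ'] at h2
    rw [h1, hx]
    simpa [hw] using h2
  have hxl : x ∈ cone l := Submodule.sum_mem _ fun j _ => hpow j
  have hw1 := wall (hS.unit hR) hS.exc x (cone_le_lspan hxl)
  rw [← hwdef, hfix, sub_self, map_zero, LinearMap.zero_apply] at hw1
  have hx0 : x = 0 := hR.eq_zero (by linarith)
  obtain ⟨k, rfl⟩ : ∃ k, h = k + 1 := ⟨h - 1, by omega⟩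
  rw [hx, Finset.sum_range_succ', add_comm] at hx0
  refine hv ?_
  have := pointed (hS.unit hR) hS.exc (hpow 0) (Submodule.sum_mem _ fun j _ => hpow (j + 1)) hx0
  simpa using this

end Geometry
section Order

variable {V : Type*} [AddCommGroup V] [Module ℝ V]
variable {χ : V →ₗ[ℝ] V →ₗ[ℝ] ℝ} {Φ : Set V}

theorem cone_congr {l l' : List V} (h : ∀ x, x ∈ l ↔ x ∈ l') : cone l = cone l' := by
  rw [cone, cone]; congr 1; ext x; exact h x

theorem lspan_congr {l l' : List V} (h : ∀ x, x ∈ l ↔ x ∈ l') : lspan l = lspan l' := by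
  rw [lspan, lspan]; congr 1; ext x; exact h x

theorem rf_neg_left (a x : V) : rf χ (-a) x = rf χ a x := by
  rw [rf_apply, rf_apply]
  simp only [map_neg, LinearMap.neg_apply]; module

/-! ### Heads of rotated sequences -/

theorem Str.head_nonneg (hR : IsRootDatum χ Φ) {a : V} {l : List V} (hS : Str χ Φ (a :: l))
    {x : V} (hx : x ∈ cone (a :: l)) : 0 ≤ χ a x := by
  refine cone_nonneg ?_ hx
  intro b hb
  rcases List.mem_cons.1 hb with rfl | hb
  · rw [hR.unit b (hS.mem b (by simp))]; exact zero_le_one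
  · exact ((List.pairwise_cons.1 hS.pw).1 b hb).1.ge

theorem Str.rot_nonpos (hR : IsRootDatum χ Φ) {a : V} {l : List V} (hS : Str χ Φ (a :: l))
    {x : V} (hx : x ∈ cone (rot χ (a :: l))) : χ x a ≤ 0 := by
  have hu := hR.unit a (hS.mem a (by simp))
  have h := hS.head_nonneg hR ((cone_rot_cons hu).1 hx)
  rw [rf_apply, map_sub, map_smul, hu, smul_eq_mul] at h
  linarith

theorem Str.mem_rot (hR : IsRootDatum χ Φ) {a : V} {l : List V} (hS : Str χ Φ (a :: l))
    {x : V} (hx : x ∈ Φ) (hxc : x ∈ cone (a :: l)) (hne : x ≠ a) :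
    x ∈ cone (rot χ (a :: l)) := by
  have hu := hR.unit a (hS.mem a (by simp))
  have hxl : x ∈ lspan (rot χ (a :: l)) := by
    rw [lspan_rot hR hS]; exact cone_le_lspan hxc
  refine ((hS.rotate hR).coh x hx hxl).resolve_right fun h => hne ?_
  rw [cone_rot_cons hu] at h
  obtain ⟨c, hc, y, hy, hxy⟩ := mem_cone_cons.1 hxc
  obtain ⟨c', hc', y', hy', hxy'⟩ := mem_cone_cons.1 h
  have he := hS.exc
  rw [Exc, List.pairwise_cons] at he
  have h1 : χ a y = 0 := lspan_zero he.1 (cone_le_lspan hy)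
  have h2 : χ a y' = 0 := lspan_zero he.1 (cone_le_lspan hy')
  have h3 : y + y' = ((χ a x + χ x a) - c - c') • a := by
    have : y' = rf χ a (-x) - c' • a := by rw [hxy']; abel
    rw [this, map_neg, rf_apply]
    nth_rewrite 1 [eq_sub_of_add_eq' hxy.symm]
    module
  have h4 := congrArg (χ a) h3
  rw [map_add, h1, h2, map_smul, hu, smul_eq_mul, mul_one, add_zero] at h4
  rw [← h4, zero_smul] at h3
  have hy0 := pointed (fun b hb => hS.unit hR b (by simp [hb])) he.2 hy hy' h3
  rw [hy0, add_zero] at hxy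
  have h5 := hR.unit x hx
  rw [hxy] at h5
  simp only [map_smul, LinearMap.smul_apply, hu, smul_eq_mul] at h5
  have : c = 1 := by nlinarith
  rw [hxy, this, one_smul]

theorem Str.mem_of_rot (hR : IsRootDatum χ Φ) {a : V} {l : List V} (hS : Str χ Φ (a :: l))
    {x : V} (hx : x ∈ Φ) (hxc : x ∈ cone (rot χ (a :: l))) (hne : x ≠ -a) :
    x ∈ cone (a :: l) := by
  have ha := hS.mem a (by simp)
  have hu := hR.unit a ha
  have h1 := hS.mem_rot hR (hR.rf_mem a ha x hx) ((cone_rot_cons hu).1 hxc) (by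
    intro h
    apply hne
    rw [← rf_self hu, ← rf_rf hu x, h])
  rwa [cone_rot_cons hu, rf_rf hu] at h1

theorem Str.rot_iter (hR : IsRootDatum χ Φ) {l : List V} (hS : Str χ Φ l) (j : ℕ) :
    Str χ Φ ((rot χ)^[j] l) := by
  induction j with
  | zero => exact hS
  | succ j ih => rw [Function.iterate_succ_apply']; exact ih.rotate hR

/-- The roots in the cone of a simple exceptional sequence, ordered by the number of rotations
after which they leave the cone: `χ` is non-negative on increasing pairs and non-positive on
decreasing ones. -/
theorem Str.exists_order (hR : IsRootDatum χ Φ) {l : List V} (hS : Str χ Φ l) :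
    ∃ τ : V → ℕ, ∀ x ∈ Φ, ∀ y ∈ Φ, x ∈ cone l → y ∈ cone l → τ x ≤ τ y →
      x = y ∨ (τ x < τ y ∧ 0 ≤ χ x y ∧ χ y x ≤ 0) := by
  classical
  refine ⟨fun x => if h : x = 0 then 0 else Nat.find (exists_exit hR hS h), ?_⟩
  intro x hx y hy hxl hyl hle
  have hx0 := hR.ne_zero hx
  have hy0 := hR.ne_zero hy
  simp only [hx0, hy0, dif_neg, not_false_eq_true] at hle ⊢
  set i := Nat.find (exists_exit hR hS hx0) with hi
  set j := Nat.find (exists_exit hR hS hy0) with hj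
  have hxi : x ∉ cone ((rot χ)^[i] l) := Nat.find_spec (exists_exit hR hS hx0)
  have hyj : y ∉ cone ((rot χ)^[j] l) := Nat.find_spec (exists_exit hR hS hy0)
  obtain ⟨k, hk⟩ : ∃ k, i = k + 1 := by
    refine Nat.exists_eq_succ_of_ne_zero fun h => ?_
    rw [h] at hxi; exact hxi hxl
  have hxk : x ∈ cone ((rot χ)^[k] l) := by
    by_contra h
    have := Nat.find_min' (exists_exit hR hS hx0) h
    omega
  have hyk : y ∈ cone ((rot χ)^[k] l) := by
    by_contra h
    have := Nat.find_min' (exists_exit hR hS hy0) h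
    omega
  have hSk := hS.rot_iter hR k
  rw [hk, Function.iterate_succ_apply'] at hxi
  generalize hm : (rot χ)^[k] l = m at *
  cases m with
  | nil => exact absurd hxk hxi
  | cons a m =>
    have hxa : x = a := by
      by_contra h
      exact hxi (hSk.mem_rot hR hx hxk h)
    by_cases hyk' : y ∈ cone (rot χ (a :: m))
    · right
      refine ⟨?_, ?_, ?_⟩
      · refine lt_of_le_of_ne hle fun h => hyj ?_
        rw [← h, hk, Function.iterate_succ_apply', hm]; exact hyk'
      · rw [hxa]; exact hSk.head_nonneg hR hyk
      · rw [hxa]; exact hSk.rot_nonpos hR hyk'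
    · left
      by_contra h
      exact hyk' (hSk.mem_rot hR hy hyk (fun h' => h (hxa.trans h'.symm)))

theorem Str.tail {a : V} (hR : IsRootDatum χ Φ) {l : List V} (hS : Str χ Φ (a :: l)) :
    Str χ Φ l := by
  have hu := hR.unit a (hS.mem a (by simp))
  have hp := List.pairwise_cons.1 hS.pw
  have key : ∀ x, χ a x = 0 → x ∈ cone (a :: l) → x ∈ cone l := by
    intro x hx hxc
    obtain ⟨c, hc, y, hy, rfl⟩ := mem_cone_cons.1 hxc
    have h1 : χ a y = 0 := lspan_zero (fun b hb => (hp.1 b hb).1) (cone_le_lspan hy)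
    rw [map_add, map_smul, hu, h1, smul_eq_mul] at hx
    have : c = 0 := by linarith
    rwa [this, zero_smul, zero_add]
  refine ⟨fun b hb => hS.mem b (by simp [hb]), hp.2, fun x hx hxl => ?_⟩
  have h0 : χ a x = 0 := lspan_zero (fun b hb => (hp.1 b hb).1) hxl
  refine (hS.coh x hx (lspan_subset (fun b hb => mem_lspan (by simp [hb])) hxl)).imp
    (key x h0) (key _ (by rw [map_neg, h0, neg_zero]))

theorem Str.dropLast {a : V} (hR : IsRootDatum χ Φ) {l : List V} (hS : Str χ Φ (l ++ [a])) :
    Str χ Φ l := by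
  have hu := hR.unit a (hS.mem a (by simp))
  have hp := List.pairwise_append.1 hS.pw
  have hz : ∀ x ∈ lspan l, χ x a = 0 := fun x hx =>
    lspan_zero (f := χ.flip a) (fun b hb => (hp.2.2 b hb a (by simp)).1) hx
  have key : ∀ x, χ x a = 0 → x ∈ cone (l ++ [a]) → x ∈ cone l := by
    intro x hx hxc
    rw [cone_congr (l' := a :: l) (by simp [or_comm])] at hxc
    obtain ⟨c, hc, y, hy, rfl⟩ := mem_cone_cons.1 hxc
    have h1 : χ y a = 0 := hz y (cone_le_lspan hy)
    rw [map_add, map_smul, LinearMap.add_apply, LinearMap.smul_apply, hu, h1, smul_eq_mul] at hx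
    have : c = 0 := by linarith
    rwa [this, zero_smul, zero_add]
  refine ⟨fun b hb => hS.mem b (by simp [hb]), hp.1, fun x hx hxl => ?_⟩
  refine (hS.coh x hx (lspan_subset (fun b hb => mem_lspan (by simp [hb])) hxl)).imp
    (key x (hz x hxl)) (key _ (by rw [map_neg, LinearMap.neg_apply, hz x hxl, neg_zero]))

/-! ### Exceptional expansions of vectors in a cone -/

/-- An expansion of `v` as a positive combination of an exceptional sequence `L` of roots in the
cone of `l`, whose off-diagonal values of `χ` are non-negative. -/
structure Expansion (χ : V →ₗ[ℝ] V →ₗ[ℝ] ℝ) (Φ : Set V) (l L : List V) (v : V) : Prop where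
  mem : ∀ x ∈ L, x ∈ Φ
  cone : ∀ x ∈ L, x ∈ cone l
  pw : L.Pairwise fun a b => χ a b = 0 ∧ 0 ≤ χ b a
  sum : ∃ f : V → ℝ, (∀ x ∈ L, 0 < f x) ∧ (L.map fun x => f x • x).sum = v

theorem pairwise_nonneg {L : List V} (h : L.Pairwise fun a b => χ a b = 0 ∧ 0 ≤ χ b a) {x y : V}
    (hx : x ∈ L) (hy : y ∈ L) (hne : x ≠ y) : 0 ≤ χ x y := by
  have : Std.Symm fun a b : V => 0 ≤ χ a b ∧ 0 ≤ χ b a := ⟨fun _ _ h => h.symm⟩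
  have hsymm : L.Pairwise (fun a b => 0 ≤ χ a b ∧ 0 ≤ χ b a) := h.imp fun h => ⟨h.1.ge, h.2⟩
  exact (hsymm.forall hx hy hne).1

/-- Existence of expansions, by induction on the length of `l` and on the number of rotations
after which `v` leaves the cone. -/
theorem exists_expansion (hR : IsRootDatum χ Φ) {l : List V} (hS : Str χ Φ l) {v : V}
    (hv : v ∈ cone l) : ∃ L, Expansion χ Φ l L v := by
  classical
  by_cases hv0 : v = 0
  · exact ⟨[], by simp, by simp, by simp, fun _ => 0, by simp, by simp [hv0]⟩
  induction hn : l.length generalizing l v with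
  | zero =>
    have : l = [] := List.length_eq_zero_iff.1 hn
    subst this
    exact absurd (by simpa [cone] using hv) hv0
  | succ n ih =>
    obtain ⟨j, hj⟩ := exists_exit hR hS hv0
    induction j generalizing l with
    | zero => exact absurd hv hj
    | succ j ihj =>
      cases l with
      | nil => simp at hn
      | cons a l =>
        have ha := hS.mem a (by simp)
        have hu := hR.unit a ha
        have hp := List.pairwise_cons.1 hS.pw
        by_cases hvr : v ∈ cone (rot χ (a :: l))
        · obtain ⟨L, hL⟩ := ihj (hS.rotate hR) hvr (by simpa [rot_cons] using hn) hj
          refine ⟨L, hL.mem, fun x hx => ?_, hL.pw, hL.sum⟩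
          refine hS.mem_of_rot hR (hL.mem x hx) (hL.cone x hx) ?_
          rintro rfl
          -- a member `-a` of `L` would force `χ (-a) v > 0`
          obtain ⟨f, hf, hs⟩ := hL.sum
          have h1 : 0 ≤ χ a v := hS.head_nonneg hR hv
          have hterm : ∀ y ∈ L, 0 ≤ f y * χ (-a) y := by
            intro y hy
            have hfy := (hf y hy).le
            refine mul_nonneg hfy ?_
            by_cases hya : y = -a
            · rw [hya]; simp [hu]
            · exact pairwise_nonneg hL.pw hx hy (fun h => hya h.symm)
          have h2 : χ (-a) v = (L.map fun x => f x * χ (-a) x).sum := by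
            rw [← hs, map_list_sum, List.map_map]
            congr 1
            refine List.map_congr_left fun y _ => ?_
            simp
          have h3 : f (-a) * χ (-a) (-a) ≤ (L.map fun x => f x * χ (-a) x).sum :=
            List.single_le_sum (by
              intro y hy
              obtain ⟨z, hz, rfl⟩ := List.mem_map.1 hy
              exact hterm z hz) _ (List.mem_map.2 ⟨-a, hx, rfl⟩)
          have h4 := hf _ hx
          simp only [map_neg, LinearMap.neg_apply, hu] at h2 h3
          linarith
        · obtain ⟨c, hc, y, hy, hvy⟩ := mem_cone_cons.1 hv
          set c' := c - (χ a v + χ v a) with hc'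
          have hrv : rf χ a v = c' • a + y := by
            rw [rf_apply, hc']
            nth_rewrite 1 [hvy]
            module
          have hneg : c' < 0 := by
            by_contra h
            push Not at h
            refine hvr ((cone_rot_cons hu).2 ?_)
            rw [hrv]
            exact mem_cone_cons.2 ⟨c', h, y, hy, rfl⟩
          set v' := rf χ a y with hv'
          have hvv : v = (-c') • a + v' := by
            rw [hv', ← rf_rf hu v, hrv, map_add, map_smul, rf_self hu]
            module
          have hv'c : v' ∈ cone (l.map (rf χ a)) := cone_map _ hy
          have hSr := hS.rotate hR
          have hrot : rot χ (a :: l) = l.map (rf χ a) ++ [-a] := by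
            rw [rot_cons, List.map_append]; simp [rf_self hu]
          have hS' : Str χ Φ (l.map (rf χ a)) := by
            rw [hrot] at hSr; exact hSr.dropLast hR
          have hL : ∃ L, Expansion χ Φ (l.map (rf χ a)) L v' := by
            by_cases h0 : v' = 0
            · exact ⟨[], by simp, by simp, by simp, fun _ => 0, by simp, by simp [h0]⟩
            · exact ih hS' hv'c h0 (by simpa using hn)
          obtain ⟨L, hL⟩ := hL
          have hxa : ∀ x ∈ cone (l.map (rf χ a)), χ x a = 0 := by
            intro x hx
            refine lspan_zero (f := χ.flip a) ?_ (cone_le_lspan hx)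
            intro b hb
            obtain ⟨d, hd, rfl⟩ := List.mem_map.1 hb
            simp only [LinearMap.flip_apply, rf_apply, map_sub, map_smul,
              hu, (hp.1 d hd).1, smul_eq_mul]
            ring
          have hcone : ∀ x ∈ L, x ∈ cone (a :: l) := by
            intro x hx
            refine hS.mem_of_rot hR (hL.mem x hx) ?_ ?_
            · rw [hrot]
              exact cone_subset (fun b hb => mem_cone (List.mem_append_left _ hb)) (hL.cone x hx)
            · rintro rfl
              have := hxa _ (hL.cone _ hx)
              simp [hu] at this
          have haL : a ∉ L := by
            intro h
            have := hxa _ (hL.cone _ h)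
            simp [hu] at this
          obtain ⟨f, hf, hs⟩ := hL.sum
          refine ⟨L ++ [a], ?_, ?_, ?_, Function.update f a (-c'), ?_, ?_⟩
          · intro x hx
            rcases List.mem_append.1 hx with h | h
            · exact hL.mem x h
            · rw [List.mem_singleton.1 h]; exact ha
          · intro x hx
            rcases List.mem_append.1 hx with h | h
            · exact hcone x h
            · rw [List.mem_singleton.1 h]; exact mem_cone (by simp)
          · rw [List.pairwise_append]
            refine ⟨hL.pw, by simp, ?_⟩
            intro x hx b hb
            rw [List.mem_singleton.1 hb]
            exact ⟨hxa x (hL.cone x hx), hS.head_nonneg hR (hcone x hx)⟩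
          · intro x hx
            rcases List.mem_append.1 hx with h | h
            · rw [Function.update_of_ne (by rintro rfl; exact haL h)]; exact hf x h
            · rw [List.mem_singleton.1 h, Function.update_self]; linarith
          · rw [List.map_append, List.sum_append, hvv, ← hs, add_comm]
            congr 1
            · simp
            · congr 1
              refine List.map_congr_left fun x hx => ?_
              rw [Function.update_of_ne (by rintro rfl; exact haL hx)]

/-- Two expansions of the same vector have the same members: compare the coefficients at the
last root, in the order of `Str.exists_order`, where they differ. -/
theorem expansion_unique (hR : IsRootDatum χ Φ) {l : List V} (hS : Str χ Φ l) {v : V}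
    {L L' : List V} (hL : Expansion χ Φ l L v) (hL' : Expansion χ Φ l L' v) :
    ∀ x, x ∈ L ↔ x ∈ L' := by
  classical
  obtain ⟨τ, hτ⟩ := hS.exists_order hR
  -- coefficient functions extended by zero
  have conv : ∀ K, Expansion χ Φ l K v → ∃ f : V → ℝ, (∀ x, x ∈ K ↔ 0 < f x) ∧
      (∀ x, 0 ≤ f x) ∧ ∀ s : Finset V, K.toFinset ⊆ s → ∑ x ∈ s, f x • x = v := by
    intro K hK
    obtain ⟨f, hf, hs⟩ := hK.sum
    have hnd : K.Nodup := hK.pw.imp_of_mem (by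
      rintro a b ha hb h rfl
      have := hR.unit a (hK.mem a ha)
      rw [h.1] at this; exact zero_ne_one this)
    refine ⟨fun x => if x ∈ K then f x else 0, ?_, ?_, ?_⟩
    · intro x
      by_cases hx : x ∈ K
      · simp [hx, hf x hx]
      · simp [hx]
    · intro x
      by_cases hx : x ∈ K
      · simp [hx, (hf x hx).le]
      · simp [hx]
    · intro s hsub
      rw [← Finset.sum_subset hsub]
      · rw [← hs, List.sum_toFinset _ hnd]
        congr 1
        refine List.map_congr_left fun x hx => ?_
        simp [hx]
      · intro x _ hx
        have : x ∉ K := by simpa using hx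
        simp [this]
  obtain ⟨f, hf1, hf2, hf3⟩ := conv L hL
  obtain ⟨g, hg1, hg2, hg3⟩ := conv L' hL'
  have aux : ∀ (K K' : List V) (f g : V → ℝ), Expansion χ Φ l K v → Expansion χ Φ l K' v →
      (∀ x, x ∈ K ↔ 0 < f x) → (∀ x, x ∈ K' ↔ 0 < g x) → (∀ x, 0 ≤ f x) → (∀ x, 0 ≤ g x) →
      ∑ x ∈ K.toFinset ∪ K'.toFinset, f x • x = ∑ x ∈ K.toFinset ∪ K'.toFinset, g x • x →
      ∀ m, m ∈ Φ → m ∈ cone l →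
      (∀ x ∈ K.toFinset ∪ K'.toFinset, f x ≠ g x → τ x ≤ τ m) → ¬ g m < f m := by
    intro K K' f g hK hK' hf hg hf0 hg0 hsum m hm hml hmax hlt
    have hmK : m ∈ K := (hf m).2 ((hg0 m).trans_lt hlt)
    have h1 : ∑ x ∈ K.toFinset ∪ K'.toFinset, (f x - g x) * χ m x = 0 := by
      have := congrArg (χ m) hsum
      simp only [map_sum, map_smul, smul_eq_mul] at this
      simp only [sub_mul, Finset.sum_sub_distrib, this, sub_self]
    have h2 : ∀ x ∈ K.toFinset ∪ K'.toFinset, 0 ≤ (f x - g x) * χ m x := by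
      intro x hx
      have hxΦ : x ∈ Φ ∧ x ∈ cone l := by
        rcases Finset.mem_union.1 hx with h | h
        · rw [List.mem_toFinset] at h; exact ⟨hK.mem x h, hK.cone x h⟩
        · rw [List.mem_toFinset] at h; exact ⟨hK'.mem x h, hK'.cone x h⟩
      by_cases hfg : f x = g x
      · rw [hfg, sub_self, zero_mul]
      rcases hτ x hxΦ.1 m hm hxΦ.2 hml (hmax x hx hfg) with rfl | ⟨_, h3, h4⟩
      · rw [hR.unit x hm]; linarith
      · by_cases hxK : x ∈ K
        · by_cases hxm : x = m
          · rw [hxm, hR.unit m hm]; linarith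
          rw [le_antisymm h4 (pairwise_nonneg hK.pw hmK hxK (Ne.symm hxm)), mul_zero]
        · have hfx : f x = 0 := le_antisymm (not_lt.1 fun h => hxK ((hf x).2 h)) (hf0 x)
          rw [hfx]
          nlinarith [hg0 x]
    have h5 : 0 < (f m - g m) * χ m m := by rw [hR.unit m hm]; linarith
    have := Finset.sum_pos' h2 ⟨m, by simp [hmK], h5⟩
    linarith
  have hfg : ∀ x ∈ L.toFinset ∪ L'.toFinset, f x = g x := by
    by_contra hcon
    push Not at hcon
    obtain ⟨x₀, hx₀, hne₀⟩ := hcon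
    obtain ⟨m, hm, hmax⟩ := Finset.exists_max_image
      ((L.toFinset ∪ L'.toFinset).filter fun x => f x ≠ g x) τ ⟨x₀, by simp only [Finset.mem_filter]; exact ⟨hx₀, hne₀⟩⟩
    rw [Finset.mem_filter] at hm
    have hmΦ : m ∈ Φ ∧ m ∈ cone l := by
      rcases Finset.mem_union.1 hm.1 with h | h
      · rw [List.mem_toFinset] at h; exact ⟨hL.mem m h, hL.cone m h⟩
      · rw [List.mem_toFinset] at h; exact ⟨hL'.mem m h, hL'.cone m h⟩
    have hs1 := hf3 _ (Finset.subset_union_left (s₂ := L'.toFinset))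
    have hs2 := hg3 _ (Finset.subset_union_right (s₁ := L.toFinset))
    rcases lt_or_gt_of_ne hm.2 with h | h
    · refine aux L' L g f hL' hL hg1 hf1 hg2 hf2 ?_ m hmΦ.1 hmΦ.2 ?_ h
      · rw [Finset.union_comm, hs1, hs2]
      · intro x hx hne
        rw [Finset.union_comm] at hx
        exact hmax x (by rw [Finset.mem_filter]; exact ⟨hx, hne.symm⟩)
    · refine aux L L' f g hL hL' hf1 hg1 hf2 hg2 (hs1.trans hs2.symm) m hmΦ.1 hmΦ.2 ?_ h
      intro x hx hne
      exact hmax x (by rw [Finset.mem_filter]; exact ⟨hx, hne⟩)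
  intro x
  constructor
  · intro hx
    rw [hg1, ← hfg x (by simp [hx]), ← hf1]; exact hx
  · intro hx
    rw [hf1, hfg x (by simp [hx]), ← hg1]; exact hx

end Order
section Perp

variable {V : Type*} [AddCommGroup V] [Module ℝ V]
variable {χ : V →ₗ[ℝ] V →ₗ[ℝ] ℝ} {Φ : Set V}

/-! ### Simple systems of right orthogonal complements -/

/-- The right `χ`-orthogonal of a positive root `m` is again spanned by a simple exceptional
sequence, consisting of positive roots. Induction on the number of rotations after which `m`
leaves the cone; when undoing a rotation, the only root which may become negative is corrected
by a reflection. -/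
theorem Str.perp_root (hR : IsRootDatum χ Φ) {l : List V} (hS : Str χ Φ l) {m : V}
    (hm : m ∈ Φ) (hml : m ∈ cone l) :
    ∃ l', Str χ Φ l' ∧ (∀ x ∈ l', x ∈ cone l) ∧
      ∀ y, y ∈ lspan l' ↔ y ∈ lspan l ∧ χ m y = 0 := by
  obtain ⟨j, hj⟩ := exists_exit hR hS (hR.ne_zero hm)
  induction j generalizing l with
  | zero => exact absurd hml hj
  | succ j ih =>
    cases l with
    | nil => exact absurd (by simpa [cone] using hml) (hR.ne_zero hm)
    | cons a l =>
      have ha := hS.mem a (by simp)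
      have hu := hR.unit a ha
      have hp := List.pairwise_cons.1 hS.pw
      by_cases hma : m = a
      · subst hma
        refine ⟨l, hS.tail hR, fun x hx => mem_cone (by simp [hx]), fun y => ?_⟩
        constructor
        · intro hy
          exact ⟨lspan_subset (fun b hb => mem_lspan (by simp [hb])) hy,
            lspan_zero (fun b hb => (hp.1 b hb).1) hy⟩
        · rintro ⟨hy, h0⟩
          obtain ⟨c, z, hz, rfl⟩ := mem_lspan_cons.1 hy
          have h1 : χ m z = 0 := lspan_zero (fun b hb => (hp.1 b hb).1) hz
          rw [map_add, map_smul, hu, h1, smul_eq_mul] at h0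
          have : c = 0 := by linarith
          rwa [this, zero_smul, zero_add]
      · obtain ⟨l', hS', hc', hs'⟩ := ih (hS.rotate hR) (hS.mem_rot hR hm hml hma) hj
        rw [lspan_rot hR hS] at hs'
        by_cases hz : -a ∈ l'
        · obtain ⟨l₁, l₂, rfl⟩ := List.append_of_mem hz
          set z := -a with hzdef
          have huz : χ z z = 1 := hR.unit z (hR.neg_mem ha)
          have hpw := List.pairwise_append.1 hS'.pw
          have hpw2 := List.pairwise_cons.1 hpw.2.1
          have hbz : ∀ b ∈ l₁ ++ l₂, χ b z = 0 ∧ χ z b ≤ 0 := by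
            intro b hb
            rcases List.mem_append.1 hb with h | h
            · exact hpw.2.2 b h z (by simp)
            · have h1 := hpw2.1 b h
              have h2 := hS.rot_nonpos hR (hc' b (by simp [h]))
              have h3 : 0 ≤ χ b z := by rw [hzdef, map_neg]; linarith
              exact ⟨le_antisymm h1.2 h3, h1.1.le⟩
          have hlist : ∀ x, x ∈ -z :: (l₁ ++ l₂).map (rf χ z) ↔
              x ∈ (l₁ ++ z :: l₂).map (rf χ z) := by
            intro x
            simp only [List.mem_cons, List.map_append, List.map_cons, List.mem_append, rf_self huz]
            tauto
          have hmem : ∀ x ∈ -z :: (l₁ ++ l₂).map (rf χ z), x ∈ Φ := by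
            intro x hx
            rw [hlist] at hx
            obtain ⟨b, hb, rfl⟩ := List.mem_map.1 hx
            exact hR.rf_mem z (hR.neg_mem ha) b (hS'.mem b hb)
          refine ⟨-z :: (l₁ ++ l₂).map (rf χ z), ⟨hmem, ?_, ?_⟩, ?_, ?_⟩
          · rw [List.pairwise_cons, List.pairwise_map]
            constructor
            · intro x hx
              obtain ⟨b, hb, rfl⟩ := List.mem_map.1 hx
              have hb1 := hbz b hb
              simp only [rf_apply, map_sub, map_smul, map_neg, LinearMap.neg_apply,
                LinearMap.sub_apply, LinearMap.smul_apply, huz, hb1.1, smul_eq_mul]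
              constructor
              · ring
              · linarith [hb1.2]
            · have hsub : (l₁ ++ l₂).Pairwise fun a b => χ a b = 0 ∧ χ b a ≤ 0 :=
                hS'.pw.sublist (List.Sublist.append_left (List.sublist_cons_self z l₂) l₁)
              refine hsub.imp_of_mem ?_
              intro b c hb hc h
              have hb1 := (hbz b hb).1
              have hc1 := (hbz c hc).1
              have e1 : χ (rf χ z b) (rf χ z c) = χ b c := by
                simp only [rf_apply, map_sub, map_smul, LinearMap.sub_apply, LinearMap.smul_apply,
                  huz, hb1, hc1, smul_eq_mul]; ring
              have e2 : χ (rf χ z c) (rf χ z b) = χ c b := by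
                simp only [rf_apply, map_sub, map_smul, LinearMap.sub_apply, LinearMap.smul_apply,
                  huz, hb1, hc1, smul_eq_mul]; ring
              rw [e1, e2]; exact h
          · exact coh_reflect hR (a := z) (by simp) hS' hlist
          · intro x hx
            rw [hlist] at hx
            obtain ⟨b, hb, rfl⟩ := List.mem_map.1 hx
            rw [hzdef, rf_neg_left]
            exact (cone_rot_cons hu).1 (hc' b hb)
          · intro y
            rw [← hs' y, lspan_congr hlist]
            have hle : lspan ((l₁ ++ z :: l₂).map (rf χ z)) ≤ lspan (l₁ ++ z :: l₂) :=
              lspan_map_rf (by simp)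
            refine ⟨fun h => hle h, fun h => ?_⟩
            refine lspan_subset ?_ h
            intro b hb
            have h1 : rf χ z b ∈ lspan ((l₁ ++ z :: l₂).map (rf χ z)) :=
              mem_lspan (List.mem_map_of_mem hb)
            have h2 : rf χ z z ∈ lspan ((l₁ ++ z :: l₂).map (rf χ z)) :=
              mem_lspan (List.mem_map_of_mem (by simp))
            have h3 := rf_mem_lspan (χ := χ) h2 h1
            rwa [rf_self huz, rf_neg_left, rf_rf huz] at h3
        · refine ⟨l', hS', fun x hx => ?_, hs'⟩
          exact hS.mem_of_rot hR (hS'.mem x hx) (hc' x hx) (by rintro rfl; exact hz hx)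

theorem Str.perp (hR : IsRootDatum χ Φ) {l : List V} (hS : Str χ Φ l) (L : List V)
    (hL : ∀ x ∈ L, x ∈ Φ) (he : Exc χ L) (hLl : ∀ x ∈ L, x ∈ lspan l) :
    ∃ l', Str χ Φ l' ∧ (∀ x ∈ l', x ∈ cone l) ∧
      ∀ y, y ∈ lspan l' ↔ y ∈ lspan l ∧ ∀ x ∈ L, χ x y = 0 := by
  induction L generalizing l with
  | nil => exact ⟨l, hS, fun x hx => mem_cone hx, by simp⟩
  | cons m L ih =>
    have hm := hL m (by simp)
    rw [Exc, List.pairwise_cons] at he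
    have h1 : ∃ l', Str χ Φ l' ∧ (∀ x ∈ l', x ∈ cone l) ∧
        ∀ y, y ∈ lspan l' ↔ y ∈ lspan l ∧ χ m y = 0 := by
      rcases hS.coh m hm (hLl m (by simp)) with h | h
      · exact hS.perp_root hR hm h
      · obtain ⟨l', h1, h2, h3⟩ := hS.perp_root hR (hR.neg_mem hm) h
        refine ⟨l', h1, h2, ?_⟩
        simpa using h3
    obtain ⟨l₁, hS₁, hc₁, hs₁⟩ := h1
    obtain ⟨l', hS', hc', hs'⟩ := ih hS₁ (fun x hx => hL x (by simp [hx])) he.2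
      (fun x hx => (hs₁ x).2 ⟨hLl x (by simp [hx]), he.1 x hx⟩)
    refine ⟨l', hS', fun x hx => cone_subset hc₁ (hc' x hx), fun y => ?_⟩
    rw [hs' y, hs₁ y]
    simp only [List.mem_cons, forall_eq_or_imp, and_assoc]

/-- Gram–Schmidt with respect to an exceptional sequence. -/
theorem exc_decomp {L : List V} (hu : ∀ x ∈ L, χ x x = 1) (he : Exc χ L) (y : V) :
    ∃ s ∈ lspan L, ∃ r, (∀ x ∈ L, χ x r = 0) ∧ y = s + r := by
  induction L generalizing y with
  | nil => exact ⟨0, zero_mem _, y, by simp, by simp⟩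
  | cons m L ih =>
    rw [Exc, List.pairwise_cons] at he
    have hm := hu m (by simp)
    obtain ⟨s, hs, r, hr, hy⟩ := ih (fun x hx => hu x (by simp [hx])) he.2 (y - χ m y • m)
    have h1 : χ m s = 0 := lspan_zero he.1 hs
    refine ⟨χ m y • m + s, mem_lspan_cons.2 ⟨_, s, hs, rfl⟩, r, ?_, ?_⟩
    · intro x hx
      rcases List.mem_cons.1 hx with rfl | hx
      · have := congrArg (χ x) hy
        rw [map_sub, map_smul, hm, map_add, h1, smul_eq_mul] at this
        linarith
      · exact hr x hx
    · rw [add_assoc, ← hy]; abel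

theorem exc_append {L K : List V} (hL : Exc χ L) (hK : Exc χ K)
    (h : ∀ x ∈ L, ∀ y ∈ K, χ x y = 0) : Exc χ (L ++ K) :=
  List.pairwise_append.2 ⟨hL, hK, h⟩

theorem lspan_append_le {L K l : List V} :
    lspan (L ++ K) ≤ lspan l ↔ lspan L ≤ lspan l ∧ lspan K ≤ lspan l := by
  simp only [lspan, Submodule.span_le, Set.subset_def, Set.mem_ofPred_eq, List.mem_append, or_imp,
    forall_and]

/-- An exceptional sequence of roots in the span of a simple exceptional sequence can be completed
to an exceptional sequence with the same span. -/
theorem Str.complete (hR : IsRootDatum χ Φ) {l : List V} (hS : Str χ Φ l) {L : List V}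
    (hL : ∀ x ∈ L, x ∈ Φ) (he : Exc χ L) (hLl : lspan L ≤ lspan l) :
    ∃ K, Str χ Φ K ∧ Exc χ (L ++ K) ∧ lspan (L ++ K) = lspan l ∧
      ∀ y, y ∈ lspan K ↔ y ∈ lspan l ∧ ∀ x ∈ L, χ x y = 0 := by
  obtain ⟨K, hK, hc, hs⟩ := hS.perp hR L hL he (fun x hx => hLl (mem_lspan hx))
  have hKl : lspan K ≤ lspan l := fun y hy => ((hs y).1 hy).1
  refine ⟨K, hK, exc_append he hK.exc fun x hx y hy => ((hs y).1 (mem_lspan hy)).2 x hx,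
    le_antisymm (lspan_append_le.2 ⟨hLl, hKl⟩) ?_, hs⟩
  intro y hy
  obtain ⟨s, hsL, r, hr, rfl⟩ := exc_decomp (fun x hx => hR.unit x (hL x hx)) he y
  have hrl : r ∈ lspan l := by simpa using sub_mem hy (hLl hsL)
  exact add_mem (lspan_subset (fun b hb => mem_lspan (by simp [hb])) hsL)
    (lspan_subset (fun b hb => mem_lspan (by simp [hb])) ((hs r).2 ⟨hrl, hr⟩))

/-- In a completion `L ++ K` of `L`, the span of `L` is the left orthogonal of `K`. -/
theorem mem_lspan_of_left_perp (hR : IsRootDatum χ Φ) {L K : List V}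
    (he : Exc χ (L ++ K)) {x : V} (hx : x ∈ lspan (L ++ K)) (h : ∀ y ∈ K, χ x y = 0) :
    x ∈ lspan L := by
  have he' := List.pairwise_append.1 he
  have : lspan (L ++ K) ≤ lspan L ⊔ lspan K := Submodule.span_le.2 fun b hb => by
    rcases List.mem_append.1 hb with hb | hb
    · exact Submodule.mem_sup_left (mem_lspan hb)
    · exact Submodule.mem_sup_right (mem_lspan hb)
  obtain ⟨s, hs, r, hr, rfl⟩ := Submodule.mem_sup.1 (this hx)
  have h1 : ∀ y ∈ K, χ s y = 0 := fun y hy =>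
    lspan_zero (f := χ.flip y) (fun b hb => he'.2.2 b hb y hy) hs
  have h2 : ∀ y ∈ K, χ r y = 0 := fun y hy => by
    have := h y hy
    rw [map_add, LinearMap.add_apply, h1 y hy, zero_add] at this
    exact this
  have h3 : r = 0 := hR.eq_zero (lspan_zero h2 hr)
  rwa [h3, add_zero]

/-- The setting of the lattice argument: a simple exceptional sequence spanning the space. -/
structure FullStr (χ : V →ₗ[ℝ] V →ₗ[ℝ] ℝ) (Φ : Set V) (l : List V) : Prop extends
  Str χ Φ l where
  top : ∀ x, x ∈ lspan l

/-- Serre duality: `χ (γ x) y = - χ y x` for the Coxeter element `γ`. -/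
theorem FullStr.serre (hR : IsRootDatum χ Φ) {l : List V} (hS : FullStr χ Φ l) (x y : V) :
    χ (wl χ l x) y = - χ y x := by
  have := wall (hS.unit hR) hS.exc x (hS.top y)
  rw [map_sub, LinearMap.sub_apply] at this
  linarith

theorem wl_mem (hR : IsRootDatum χ Φ) {l : List V} (hl : ∀ a ∈ l, a ∈ Φ) {x : V} (hx : x ∈ Φ) :
    wl χ l x ∈ Φ := by
  induction l with
  | nil => simpa [wl_nil]
  | cons b l ih =>
    rw [wl_cons]
    exact hR.rf_mem b (hl b (by simp)) _ (ih fun a ha => hl a (by simp [ha]))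

/-- The span of every exceptional sequence of roots has a simple exceptional sequence of
positive roots. -/
theorem FullStr.exists_str (hR : IsRootDatum χ Φ) {l : List V} (hS : FullStr χ Φ l) {L : List V}
    (hL : ∀ x ∈ L, x ∈ Φ) (he : Exc χ L) :
    ∃ l', Str χ Φ l' ∧ (∀ x ∈ l', x ∈ cone l) ∧ lspan l' = lspan L := by
  obtain ⟨K, hK, hLK, hsp, -⟩ := hS.complete hR hL he (fun x _ => hS.top x)
  have hγ : ∀ x y, χ (wl χ l x) (wl χ l y) = χ x y := fun x y => by
    rw [hS.serre hR, hS.serre hR, neg_neg]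
  obtain ⟨l', hS', hc', hs'⟩ := hS.perp hR (K.map (wl χ l)) (by
      intro x hx
      obtain ⟨b, hb, rfl⟩ := List.mem_map.1 hx
      exact wl_mem hR hS.mem (hK.mem b hb)) (by
      rw [Exc, List.pairwise_map]
      refine hK.exc.imp fun h => ?_
      rw [hγ]; exact h) (fun x _ => hS.top x)
  have he' := List.pairwise_append.1 hLK
  refine ⟨l', hS', hc', ?_⟩
  ext y
  rw [hs' y]
  simp only [List.mem_map, forall_exists_index, and_imp, forall_apply_eq_imp_iff₂, hS.serre hR,
    neg_eq_zero]
  constructor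
  · rintro ⟨h1, h2⟩
    exact mem_lspan_of_left_perp hR hLK (hsp ▸ h1) h2
  · intro hy
    exact ⟨hS.top y, fun z hz => lspan_zero (f := χ.flip z) (fun b hb => he'.2.2 b hb z hz) hy⟩

/-- Completion inside the span of an arbitrary exceptional sequence. -/
theorem FullStr.complete_exc (hR : IsRootDatum χ Φ) {l : List V} (hS : FullStr χ Φ l)
    {L L' : List V} (hL : ∀ x ∈ L, x ∈ Φ) (he : Exc χ L) (hL' : ∀ x ∈ L', x ∈ Φ)
    (he' : Exc χ L') (h : lspan L ≤ lspan L') :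
    ∃ K, (∀ x ∈ K, x ∈ Φ) ∧ Exc χ (L ++ K) ∧ lspan (L ++ K) = lspan L' := by
  obtain ⟨l', hS', -, hs'⟩ := hS.exists_str hR hL' he'
  obtain ⟨K, hK, hLK, hsp, -⟩ := hS'.complete hR hL he (hs' ▸ h)
  exact ⟨K, hK.mem, hLK, hsp.trans hs'⟩

/-! ### Meets of spans of exceptional sequences -/

/-- If a polynomial curve meets a subspace in infinitely many integer points, all its coefficients
lie in the subspace. -/
theorem coeff_mem_of_infinite (S : Submodule ℝ V) {p : ℕ} (k : Fin p → V) {T : Set ℕ}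
    (hT : T.Infinite) (h : ∀ t ∈ T, ∑ i : Fin p, (t : ℝ) ^ (i : ℕ) • k i ∈ S) (i : Fin p) : k i ∈ S := by
  by_contra hk
  obtain ⟨f, hf, hS⟩ := Submodule.exists_le_ker_of_notMem hk
  set P : Polynomial ℝ := ∑ i : Fin p, Polynomial.monomial (i : ℕ) (f (k i)) with hP
  have hP0 : P = 0 := by
    refine Polynomial.eq_zero_of_infinite_isRoot _ ?_
    refine (hT.image (Nat.cast_injective (R := ℝ)).injOn).mono ?_
    rintro _ ⟨t, ht, rfl⟩
    have := hS (h t ht)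
    rw [LinearMap.mem_ker, map_sum] at this
    rw [Set.mem_ofPred_eq, Polynomial.IsRoot, hP, Polynomial.eval_finsetSum]
    rw [← this]
    refine Finset.sum_congr rfl fun i _ => ?_
    rw [Polynomial.eval_monomial, map_smul, smul_eq_mul, mul_comm]
  have := congrArg (fun P => Polynomial.coeff P (i : ℕ)) hP0
  simp only [hP, Polynomial.finsetSum_coeff, Polynomial.coeff_monomial, Polynomial.coeff_zero] at this
  rw [Finset.sum_eq_single i] at this
  · simp at this; exact hf this
  · intro j _ hj
    rw [if_neg (fun h => hj (Fin.ext h))]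
  · simp

/-- The meet of two exceptional spans. A generic positive combination of the positive roots in the
intersection has the same expansion in both spans, hence an expansion in the intersection, whose
support must span all these roots. -/
theorem FullStr.meet (hR : IsRootDatum χ Φ) {l : List V} (hS : FullStr χ Φ l) {L₁ L₂ : List V}
    (hL₁ : ∀ x ∈ L₁, x ∈ Φ) (he₁ : Exc χ L₁) (hL₂ : ∀ x ∈ L₂, x ∈ Φ) (he₂ : Exc χ L₂) :
    ∃ L, (∀ x ∈ L, x ∈ Φ) ∧ Exc χ L ∧ lspan L ≤ lspan L₁ ∧ lspan L ≤ lspan L₂ ∧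
      ∀ x ∈ Φ, x ∈ lspan L₁ → x ∈ lspan L₂ → x ∈ lspan L := by
  classical
  obtain ⟨l₁, hS₁, hc₁, hs₁⟩ := hS.exists_str hR hL₁ he₁
  obtain ⟨l₂, hS₂, hc₂, hs₂⟩ := hS.exists_str hR hL₂ he₂
  rw [← hs₁, ← hs₂]
  have hfin : (Φ ∩ {x | x ∈ cone l ∧ x ∈ lspan l₁ ∧ x ∈ lspan l₂}).Finite :=
    hR.finite.subset Set.inter_subset_left
  obtain ⟨p, k, -, hk⟩ := hfin.fin_param
  have hkm : ∀ i, k i ∈ Φ ∧ k i ∈ cone l ∧ k i ∈ lspan l₁ ∧ k i ∈ lspan l₂ := fun i => by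
    have : k i ∈ Set.range k := ⟨i, rfl⟩
    rw [hk] at this; exact this
  have hpos : ∀ l' : List V, Str χ Φ l' → (∀ x ∈ l', x ∈ cone l) → ∀ x ∈ Φ, x ∈ cone l →
      x ∈ lspan l' → x ∈ cone l' := by
    intro l' hS' hc' x hx hxc hxl
    refine (hS'.coh x hx hxl).resolve_right fun h => ?_
    exact hR.ne_zero hx (pointed (hS.unit hR) hS.exc hxc (cone_subset hc' h) (by simp))
  have hE : ∀ t : ℕ, ∃ L, (∀ x ∈ L, x ∈ Φ) ∧ Exc χ L ∧ lspan L ≤ lspan l₁ ∧ lspan L ≤ lspan l₂ ∧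
      ∑ i : Fin p, (t : ℝ) ^ (i : ℕ) • k i ∈ lspan L := by
    intro t
    set v := ∑ i : Fin p, (t : ℝ) ^ (i : ℕ) • k i with hv
    have hvc : ∀ l' : List V, Str χ Φ l' → (∀ x ∈ l', x ∈ cone l) → (∀ i, k i ∈ lspan l') →
        v ∈ cone l' := fun l' hS' hc' hl' => Submodule.sum_mem _ fun i _ =>
      cone_smul (by positivity) (hpos l' hS' hc' _ (hkm i).1 (hkm i).2.1 (hl' i))
    obtain ⟨M₁, hM₁⟩ := exists_expansion hR hS₁ (hvc l₁ hS₁ hc₁ fun i => (hkm i).2.2.1)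
    obtain ⟨M₂, hM₂⟩ := exists_expansion hR hS₂ (hvc l₂ hS₂ hc₂ fun i => (hkm i).2.2.2)
    have hM := expansion_unique hR hS.toStr
      (⟨hM₁.mem, fun x hx => cone_subset hc₁ (hM₁.cone x hx), hM₁.pw, hM₁.sum⟩ :
        Expansion χ Φ l M₁ v)
      (⟨hM₂.mem, fun x hx => cone_subset hc₂ (hM₂.cone x hx), hM₂.pw, hM₂.sum⟩ :
        Expansion χ Φ l M₂ v)
    refine ⟨M₁, hM₁.mem, hM₁.pw.imp fun h => h.1,
      Submodule.span_le.2 fun x hx => cone_le_lspan (hM₁.cone x hx),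
      Submodule.span_le.2 fun x hx => cone_le_lspan (hM₂.cone x ((hM x).1 hx)), ?_⟩
    obtain ⟨f, -, hf⟩ := hM₁.sum
    rw [← hf]
    refine list_sum_mem fun y hy => ?_
    obtain ⟨x, hx, rfl⟩ := List.mem_map.1 hy
    exact Submodule.smul_mem _ _ (mem_lspan hx)
  choose L hLΦ hLe hLl₁ hLl₂ hLv using hE
  have : Finite (𝒫 Φ) := hR.finite.finite_subsets
  let g : ℕ → 𝒫 Φ := fun t => ⟨{x | x ∈ L t}, fun x hx => hLΦ t x hx⟩
  obtain ⟨S, hSinf⟩ := Finite.exists_infinite_fiber g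
  have hinf : (g ⁻¹' {S}).Infinite := Set.infinite_coe_iff.1 hSinf
  obtain ⟨t₀, ht₀⟩ := hinf.nonempty
  have hsame : ∀ t ∈ g ⁻¹' {S}, lspan (L t) = lspan (L t₀) := by
    intro t ht
    have h1 : g t = g t₀ := (Set.mem_singleton_iff.1 ht).trans (Set.mem_singleton_iff.1 ht₀).symm
    have h2 : {x | x ∈ L t} = {x | x ∈ L t₀} := congrArg Subtype.val h1
    rw [lspan, lspan, h2]
  have hmem := coeff_mem_of_infinite (lspan (L t₀)) k hinf (fun t ht => hsame t ht ▸ hLv t)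
  have hmem' : ∀ x ∈ Φ, x ∈ cone l → x ∈ lspan l₁ → x ∈ lspan l₂ → x ∈ lspan (L t₀) := by
    intro x hx hxc hx1 hx2
    have : x ∈ Set.range k := by rw [hk]; exact ⟨hx, hxc, hx1, hx2⟩
    obtain ⟨i, rfl⟩ := this
    exact hmem i
  refine ⟨L t₀, hLΦ t₀, hLe t₀, hLl₁ t₀, hLl₂ t₀, fun x hx h1 h2 => ?_⟩
  rcases hS.coh x hx (hS.top x) with h | h
  · exact hmem' x hx h h1 h2
  · have := hmem' (-x) (hR.neg_mem hx) h (neg_mem h1) (neg_mem h2)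
    simpa using neg_mem this

/-! ### Factorisations of the Coxeter element -/

theorem finrank_lspan_le (L : List V) : Module.finrank ℝ (lspan L) ≤ L.length := by
  classical
  have : {x | x ∈ L} = (L.toFinset : Set V) := by ext; simp
  rw [lspan, this]
  exact (finrank_span_finset_le_card _).trans (List.toFinset_card_le L)

theorem exc_linearIndepOn {L : List V} (hu : ∀ x ∈ L, χ x x = 1) (he : Exc χ L) :
    LinearIndepOn ℝ id {x | x ∈ L} := by
  induction L with
  | nil => simp
  | cons m L ih =>
    rw [Exc, List.pairwise_cons] at he
    have hm := hu m (by simp)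
    have hmL : m ∉ lspan L := fun h => by
      have h0 : χ m m = 0 := lspan_zero he.1 h
      rw [hm] at h0; exact one_ne_zero h0
    have : {x | x ∈ m :: L} = insert m {x | x ∈ L} := by ext; simp
    rw [this]
    exact (ih (fun x hx => hu x (by simp [hx])) he.2).id_insert hmL

theorem exc_finrank {L : List V} (hu : ∀ x ∈ L, χ x x = 1) (he : Exc χ L) :
    Module.finrank ℝ (lspan L) = L.length := by
  classical
  have hnd : L.Nodup := he.imp_of_mem (by
    rintro a b ha hb h rfl
    rw [hu a ha] at h; exact one_ne_zero h)
  have hset : {x | x ∈ L} = (L.toFinset : Set V) := by ext; simp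
  have h1 := exc_linearIndepOn hu he
  rw [lspan]
  rw [hset] at h1 ⊢
  rw [finrank_span_finset_eq_card h1, List.toFinset_card_of_nodup hnd]

theorem FullStr.lspan_eq_top {l : List V} (hS : FullStr χ Φ l) : lspan l = ⊤ :=
  eq_top_iff.2 fun x _ => hS.top x

theorem FullStr.finiteDimensional {l : List V} (hS : FullStr χ Φ l) : FiniteDimensional ℝ V := by
  classical
  have hset : {x | x ∈ l} = (l.toFinset : Set V) := by ext; simp
  refine ⟨l.toFinset, ?_⟩
  rw [← hset]; exact hS.lspan_eq_top

theorem FullStr.finrank (hR : IsRootDatum χ Φ) {l : List V} (hS : FullStr χ Φ l) :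
    Module.finrank ℝ V = l.length := by
  rw [← exc_finrank (hS.unit hR) hS.exc, hS.lspan_eq_top, finrank_top]

theorem FullStr.eq_zero_of_fixed (hR : IsRootDatum χ Φ) {l : List V} (hS : FullStr χ Φ l) {x : V}
    (hx : wl χ l x = x) : x = 0 := by
  have h := hS.serre hR x x
  rw [hx] at h
  exact hR.eq_zero (by linarith)

theorem FullStr.length_le (hR : IsRootDatum χ Φ) {l : List V} (hS : FullStr χ Φ l) {L : List V}
    (hL : wl χ L = wl χ l) : l.length ≤ L.length := by
  have := hS.finiteDimensional
  have hinj : Function.Injective (1 - wl χ l : Module.End ℝ V) := by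
    rw [← LinearMap.ker_eq_bot, LinearMap.ker_eq_bot']
    intro x hx
    exact hS.eq_zero_of_fixed hR (sub_eq_zero.1 hx).symm
  have htop : lspan L = ⊤ := by
    refine eq_top_iff.2 fun x _ => ?_
    obtain ⟨y, rfl⟩ := LinearMap.injective_iff_surjective.1 hinj x
    have := sub_wl_mem (χ := χ) L y
    rwa [hL] at this
  have := finrank_lspan_le L
  rwa [htop, finrank_top, hS.finrank hR] at this

theorem wl_fix {L : List V} {z : V} (hz : ∀ y ∈ L, χ y z + χ z y = 0) : wl χ L z = z := by
  induction L with
  | nil => simp [wl_nil]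
  | cons a L ih =>
    rw [wl_cons, Module.End.mul_apply, ih (fun y hy => hz y (by simp [hy])), rf_apply,
      hz a (by simp), zero_smul, sub_zero]

/-- In a factorisation of the Coxeter element into a minimal number of reflections, the roots of
an initial part are left orthogonal to those of the remaining part. -/
theorem FullStr.factor_orth (hR : IsRootDatum χ Φ) {l : List V} (hS : FullStr χ Φ l)
    {L₁ L₂ : List V} (hL : wl χ (L₁ ++ L₂) = wl χ l) (hlen : (L₁ ++ L₂).length = l.length) {x y : V}
    (hx : x ∈ L₁) (hy : y ∈ L₂) : χ x y = 0 := by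
  have := hS.finiteDimensional
  let φ : V →ₗ[ℝ] (Fin L₂.length → ℝ) := LinearMap.pi fun i => χ (L₂.get i) + χ.flip (L₂.get i)
  have hφ : ∀ z ∈ LinearMap.ker φ, ∀ y ∈ L₂, χ y z + χ z y = 0 := by
    intro z hz y hy
    obtain ⟨i, rfl⟩ := List.get_of_mem hy
    exact congrFun (LinearMap.mem_ker.1 hz) i
  have hdim : L₁.length ≤ Module.finrank ℝ (LinearMap.ker φ) := by
    have h1 := LinearMap.finrank_range_add_finrank_ker φ
    have h2 : Module.finrank ℝ (LinearMap.range φ) ≤ L₂.length := by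
      simpa using Submodule.finrank_le (LinearMap.range φ)
    rw [hS.finrank hR, ← hlen, List.length_append] at h1
    omega
  let ψ : Module.End ℝ V := 1 - wl χ l
  have hinj : Function.Injective ψ := by
    rw [← LinearMap.ker_eq_bot, LinearMap.ker_eq_bot']
    intro x hx
    exact hS.eq_zero_of_fixed hR (sub_eq_zero.1 hx).symm
  have hle : (LinearMap.ker φ).map ψ ≤ lspan L₁ := by
    rintro _ ⟨z, hz, rfl⟩
    have h1 : ψ z = z - wl χ L₁ z := by
      change z - wl χ l z = _
      rw [← hL, wl_append, Module.End.mul_apply, wl_fix (hφ z hz)]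
    rw [h1]; exact sub_wl_mem _ _
  have heq : (LinearMap.ker φ).map ψ = lspan L₁ := by
    refine Submodule.eq_of_le_of_finrank_le hle ?_
    rw [(Submodule.equivMapOfInjective ψ hinj (LinearMap.ker φ)).symm.finrank_eq]
    exact (finrank_lspan_le L₁).trans hdim
  have hxm := mem_lspan hx
  rw [← heq] at hxm
  obtain ⟨z, hz, rfl⟩ := hxm
  change χ (z - wl χ l z) y = 0
  rw [wall (hS.unit hR) hS.exc z (hS.top y), add_comm]
  exact hφ z hz y hy

theorem FullStr.exc_of_factor (hR : IsRootDatum χ Φ) {l : List V} (hS : FullStr χ Φ l)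
    {L : List V} (hL : wl χ L = wl χ l) (hlen : L.length = l.length) : Exc χ L := by
  have aux : ∀ L : List V, (∀ L₁ L₂, L = L₁ ++ L₂ → ∀ x ∈ L₁, ∀ y ∈ L₂, χ x y = 0) → Exc χ L := by
    intro L
    induction L with
    | nil => intro _; exact List.Pairwise.nil
    | cons a L ih =>
      intro h
      refine List.pairwise_cons.2 ⟨fun y hy => h [a] L rfl a (by simp) y hy, ih ?_⟩
      rintro L₁ L₂ rfl x hx y hy
      exact h (a :: L₁) L₂ rfl x (by simp [hx]) y hy
  refine aux L ?_
  rintro L₁ L₂ rfl x hx y hy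
  exact hS.factor_orth hR hL hlen hx hy

theorem FullStr.complete_top (hR : IsRootDatum χ Φ) {l : List V} (hS : FullStr χ Φ l) {L : List V}
    (hL : ∀ x ∈ L, x ∈ Φ) (he : Exc χ L) : ∃ K, (∀ x ∈ K, x ∈ Φ) ∧ Exc χ (L ++ K) ∧
      (L ++ K).length = l.length ∧ wl χ (L ++ K) = wl χ l ∧ lspan (L ++ K) = ⊤ := by
  obtain ⟨K, hK, hLK, hsp, -⟩ := hS.complete hR hL he (fun x _ => hS.top x)
  have hm : ∀ x ∈ L ++ K, x ∈ Φ := fun x hx => (List.mem_append.1 hx).elim (hL x) (hK.mem x)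
  refine ⟨K, hK.mem, hLK, ?_, wl_eq_of_lspan hR hm hS.mem hLK hS.exc hsp,
    hsp.trans hS.lspan_eq_top⟩
  rw [← exc_finrank (fun x hx => hR.unit x (hm x hx)) hLK, hsp, exc_finrank (hS.unit hR) hS.exc]

end Perp
section Length

variable {ι : Type*} {G : Type*} [Group G] {N : CoxeterMatrix ι} (cs : CoxeterSystem N G)

/-! ### Reflection length -/

theorem rlen_le {l : List G} (hl : ∀ t ∈ l, cs.IsReflection t) : rlen cs l.prod ≤ l.length :=
  Nat.sInf_le ⟨l, hl, rfl, rfl⟩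

theorem exists_rlen (w : G) :
    ∃ l : List G, (∀ t ∈ l, cs.IsReflection t) ∧ l.length = rlen cs w ∧ l.prod = w := by
  have hne : {k | ∃ l : List G, (∀ t ∈ l, cs.IsReflection t) ∧ l.length = k ∧
      l.prod = w}.Nonempty := by
    obtain ⟨l, rfl⟩ := cs.wordProd_surjective w
    refine ⟨l.length, l.map cs.simple, ?_, by simp, rfl⟩
    intro t ht
    obtain ⟨i, -, rfl⟩ := List.mem_map.1 ht
    exact cs.isReflection_simple i
  exact Nat.sInf_mem hne

theorem rlen_one : rlen cs 1 = 0 := by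
  have := rlen_le cs (l := []) (by simp)
  simpa using this

theorem eq_one_of_rlen {w : G} (h : rlen cs w = 0) : w = 1 := by
  obtain ⟨l, -, hl, rfl⟩ := exists_rlen cs w
  rw [h] at hl
  rw [List.length_eq_zero_iff.1 hl, List.prod_nil]

theorem rlen_mul (x y : G) : rlen cs (x * y) ≤ rlen cs x + rlen cs y := by
  obtain ⟨l, hl, hl', hx⟩ := exists_rlen cs x
  obtain ⟨m, hm, hm', hy⟩ := exists_rlen cs y
  rw [← hl', ← hm', ← hx, ← hy, ← List.prod_append, ← List.length_append]
  exact rlen_le cs fun t ht => (List.mem_append.1 ht).elim (hl t) (hm t)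

theorem rlen_conj_le (g x : G) : rlen cs (g * x * g⁻¹) ≤ rlen cs x := by
  obtain ⟨l, hl, hl', hx⟩ := exists_rlen cs x
  have h := rlen_le cs (l := l.map (MulAut.conj g)) (by
    intro t ht
    obtain ⟨s, hs, rfl⟩ := List.mem_map.1 ht
    exact (hl s hs).conj g)
  rw [← map_list_prod, hx, List.length_map, hl'] at h
  simpa using h

theorem rlen_conj (g x : G) : rlen cs (g * x * g⁻¹) = rlen cs x := by
  refine le_antisymm (rlen_conj_le cs g x) ?_
  have := rlen_conj_le cs g⁻¹ (g * x * g⁻¹)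
  simpa [mul_assoc] using this

theorem rlen_mul_comm (x y : G) : rlen cs (x * y) = rlen cs (y * x) := by
  have := rlen_conj cs y (x * y)
  rw [← this]; congr 1; group

theorem rle_mul_iff {x y : G} : rle cs x (x * y) ↔ rlen cs (x * y) = rlen cs x + rlen cs y := by
  rw [rle, inv_mul_cancel_left]

theorem rle_iff_right {x y : G} : rle cs x y ↔ rlen cs y = rlen cs (y * x⁻¹) + rlen cs x := by
  rw [rle, rlen_mul_comm cs x⁻¹ y, add_comm]

theorem rle_mul_right_iff {x y : G} :
    rle cs y (x * y) ↔ rlen cs (x * y) = rlen cs x + rlen cs y := by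
  rw [rle_iff_right, mul_inv_cancel_right]

theorem rle_refl (x : G) : rle cs x x := by
  rw [rle, inv_mul_cancel, rlen_one, add_zero]

theorem rle_trans {x y z : G} (h : rle cs x y) (h' : rle cs y z) : rle cs x z := by
  rw [rle] at *
  have h1 := rlen_mul cs (x⁻¹ * y) (y⁻¹ * z)
  have h2 := rlen_mul cs x (x⁻¹ * z)
  rw [show x⁻¹ * y * (y⁻¹ * z) = x⁻¹ * z by group] at h1
  rw [mul_inv_cancel_left] at h2
  omega

theorem rle_antisymm {x y : G} (h : rle cs x y) (h' : rle cs y x) : x = y := by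
  rw [rle] at *
  have : x⁻¹ * y = 1 := eq_one_of_rlen cs (by omega)
  exact inv_mul_eq_one.1 this

theorem one_rle (x : G) : rle cs 1 x := by
  rw [rle, rlen_one]; simp

end Length

section Model

variable {ι : Type*} {G : Type*} [Group G] {N : CoxeterMatrix ι}
variable {V : Type*} [AddCommGroup V] [Module ℝ V]

/-- A geometric model of a Coxeter system together with an element `γ`: a faithful representation
`ρ` under which the reflections are exactly the reflections in the roots `Φ`, and `γ` is the
product of the reflections of a simple exceptional sequence `l` spanning the space. -/
structure Model (cs : CoxeterSystem N G) (γ : G) (χ : V →ₗ[ℝ] V →ₗ[ℝ] ℝ) (Φ : Set V)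
    (ρ : G →* Module.End ℝ V) (l : List V) : Prop where
  inj : Function.Injective ρ
  refl : ∀ t, cs.IsReflection t → ∃ a ∈ Φ, ρ t = rf χ a
  root : ∀ a ∈ Φ, ∃ t, cs.IsReflection t ∧ ρ t = rf χ a
  datum : IsRootDatum χ Φ
  full : FullStr χ Φ l
  cox : ρ γ = wl χ l

variable {cs : CoxeterSystem N G} {γ : G} {χ : V →ₗ[ℝ] V →ₗ[ℝ] ℝ} {Φ : Set V}
  {ρ : G →* Module.End ℝ V} {l : List V}

namespace Model

theorem exists_elt (h : Model cs γ χ Φ ρ l) (L : List V) (hL : ∀ x ∈ L, x ∈ Φ) :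
    ∃ w, rlen cs w ≤ L.length ∧ ρ w = wl χ L := by
  suffices ∃ T : List G, (∀ t ∈ T, cs.IsReflection t) ∧ T.length = L.length ∧ ρ T.prod = wl χ L by
    obtain ⟨T, h1, h2, h3⟩ := this
    exact ⟨T.prod, h2 ▸ rlen_le cs h1, h3⟩
  induction L with
  | nil => exact ⟨[], by simp, rfl, by simp [wl_nil]⟩
  | cons a L ih =>
    obtain ⟨T, h1, h2, h3⟩ := ih (fun x hx => hL x (by simp [hx]))
    obtain ⟨t, ht, ht'⟩ := h.root a (hL a (by simp))
    refine ⟨t :: T, ?_, by simp [h2], by rw [List.prod_cons, map_mul, h3, ht', wl_cons]⟩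
    simpa using ⟨ht, h1⟩

theorem exists_list (h : Model cs γ χ Φ ρ l) (w : G) :
    ∃ L : List V, (∀ x ∈ L, x ∈ Φ) ∧ L.length = rlen cs w ∧ ρ w = wl χ L := by
  obtain ⟨T, h1, h2, h3⟩ := exists_rlen cs w
  rw [← h2, ← h3]
  clear h2 h3
  induction T with
  | nil => exact ⟨[], by simp, rfl, by simp [wl_nil]⟩
  | cons t T ih =>
    obtain ⟨L, h2, h3, h4⟩ := ih (fun x hx => h1 x (by simp [hx]))
    obtain ⟨a, ha, ha'⟩ := h.refl t (h1 t (by simp))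
    refine ⟨a :: L, ?_, by simp [h3], by rw [List.prod_cons, map_mul, h4, ha', wl_cons]⟩
    simpa using ⟨ha, h2⟩

theorem rlen_cox (h : Model cs γ χ Φ ρ l) : rlen cs γ = l.length := by
  refine le_antisymm ?_ ?_
  · obtain ⟨w, hw, hw'⟩ := h.exists_elt l h.full.mem
    rw [← h.cox] at hw'
    rwa [h.inj hw'] at hw
  · obtain ⟨L, -, hL, hL'⟩ := h.exists_list γ
    rw [← hL]
    exact h.full.length_le h.datum (hL'.symm.trans h.cox)

theorem exists_exc (h : Model cs γ χ Φ ρ l) {w : G} (hw : rle cs w γ) :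
    ∃ L : List V, (∀ x ∈ L, x ∈ Φ) ∧ Exc χ L ∧ ρ w = wl χ L := by
  obtain ⟨L, hL, hlen, hL'⟩ := h.exists_list w
  obtain ⟨K, hK, hlenK, hK'⟩ := h.exists_list (w⁻¹ * γ)
  rw [rle, h.rlen_cox] at hw
  have := h.full.exc_of_factor h.datum (L := L ++ K)
    (by rw [wl_append, ← hL', ← hK', ← map_mul, mul_inv_cancel_left, h.cox])
    (by rw [List.length_append, hlen, hlenK, hw])
  exact ⟨L, hL, (List.pairwise_append.1 this).1, hL'⟩

theorem rle_of_exc (h : Model cs γ χ Φ ρ l) {L : List V} (hL : ∀ x ∈ L, x ∈ Φ) (he : Exc χ L)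
    {w : G} (hw : ρ w = wl χ L) : rle cs w γ ∧ rlen cs w = L.length := by
  obtain ⟨K, hK, -, hlen, hwl, -⟩ := h.full.complete_top h.datum hL he
  obtain ⟨w', hw', hw''⟩ := h.exists_elt L hL
  rw [← hw] at hw''
  rw [h.inj hw''] at hw'
  obtain ⟨z, hz, hz'⟩ := h.exists_elt K hK
  have hwz : w * z = γ := h.inj (by rw [map_mul, hw, hz', ← wl_append, hwl, h.cox])
  have h1 := rlen_mul cs w z
  rw [List.length_append] at hlen
  have h2 := h.rlen_cox
  subst hwz
  rw [rle_mul_iff]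
  omega

theorem rle_iff (h : Model cs γ χ Φ ρ l) {K L : List V} (hK : ∀ x ∈ K, x ∈ Φ) (heK : Exc χ K)
    (hL : ∀ x ∈ L, x ∈ Φ) (heL : Exc χ L) {u w : G} (hu : ρ u = wl χ K) (hw : ρ w = wl χ L) :
    rle cs u w ↔ lspan K ≤ lspan L := by
  have hu' := h.rle_of_exc hK heK hu
  have hw' := h.rle_of_exc hL heL hw
  constructor
  · intro hle
    obtain ⟨J, hJ, hlenJ, hJ'⟩ := h.exists_list (u⁻¹ * w)
    obtain ⟨P, hP, hexP, hlen, hwl, htop⟩ := h.full.complete_top h.datum hL heL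
    have hwKJ : wl χ (K ++ J) = wl χ L := by
      rw [wl_append, ← hu, ← hJ', ← map_mul, mul_inv_cancel_left, hw]
    rw [rle] at hle
    have hex := h.full.exc_of_factor h.datum (L := (K ++ J) ++ P)
      (by rw [wl_append, hwKJ, ← wl_append, hwl])
      (by rw [List.length_append, List.length_append] at *; omega)
    have hperp := (List.pairwise_append.1 hex).2.2
    refine Submodule.span_le.2 fun x hx => ?_
    exact mem_lspan_of_left_perp h.datum hexP (htop ▸ Submodule.mem_top)
      (hperp x (List.mem_append_left _ hx))
  · intro hle
    obtain ⟨J, hJ, hexJ, hsp⟩ := h.full.complete_exc h.datum hK heK hL heL hle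
    have hKJ : ∀ x ∈ K ++ J, x ∈ Φ := fun x hx => (List.mem_append.1 hx).elim (hK x) (hJ x)
    obtain ⟨z, hz, hz'⟩ := h.exists_elt J hJ
    have hwz : u * z = w := h.inj (by
      rw [map_mul, hu, hz', ← wl_append, hw]
      exact wl_eq_of_lspan h.datum hKJ hL hexJ heL hsp)
    have hlen : (K ++ J).length = L.length := by
      rw [← exc_finrank (fun x hx => h.datum.unit x (hKJ x hx)) hexJ, hsp,
        exc_finrank (fun x hx => h.datum.unit x (hL x hx)) heL]
    rw [List.length_append] at hlen
    have h1 := rlen_mul cs u z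
    subst hwz
    rw [rle_mul_iff]
    omega

/-- The interval `[1, γ]` has binary meets. -/
theorem meet (h : Model cs γ χ Φ ρ l) {α β : G} (hα : rle cs α γ) (hβ : rle cs β γ) :
    ∃ δ, rle cs δ α ∧ rle cs δ β ∧ ∀ ε, rle cs ε α → rle cs ε β → rle cs ε δ := by
  obtain ⟨L₁, hL₁, he₁, hρ₁⟩ := h.exists_exc hα
  obtain ⟨L₂, hL₂, he₂, hρ₂⟩ := h.exists_exc hβ
  obtain ⟨L, hL, he, h1, h2, h3⟩ := h.full.meet h.datum hL₁ he₁ hL₂ he₂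
  obtain ⟨δ, -, hδ⟩ := h.exists_elt L hL
  refine ⟨δ, (h.rle_iff hL he hL₁ he₁ hδ hρ₁).2 h1, (h.rle_iff hL he hL₂ he₂ hδ hρ₂).2 h2, ?_⟩
  intro ε hε1 hε2
  obtain ⟨K, hK, heK, hρK⟩ := h.exists_exc (rle_trans cs hε1 hα)
  refine (h.rle_iff hK heK hL he hρK hδ).2 (Submodule.span_le.2 fun x hx => ?_)
  exact h3 x (hK x hx) ((h.rle_iff hK heK hL₁ he₁ hρK hρ₁).1 hε1 (mem_lspan hx))
    ((h.rle_iff hK heK hL₂ he₂ hρK hρ₂).1 hε2 (mem_lspan hx))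

end Model
end Model
section Garside

variable {ι : Type*} {G : Type*} [Group G] {N : CoxeterMatrix ι} {cs : CoxeterSystem N G} {γ : G}

/-! ### The positive monoid acts on normal forms -/

theorem rle_left_of_add {x y z : G} (hz : rle cs (x * y) z)
    (h : rlen cs (x * y) = rlen cs x + rlen cs y) : rle cs x z :=
  rle_trans cs ((rle_mul_iff cs).2 h) hz

theorem rle_right_of_add {x y z : G} (hz : rle cs (x * y) z)
    (h : rlen cs (x * y) = rlen cs x + rlen cs y) : rle cs y z :=
  rle_trans cs ((rle_mul_right_iff cs).2 h) hz

theorem pgen_one : pgen cs γ 1 = 1 := by simp [pgen]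

theorem pgen_of {u : G} (hu : u ≠ 1 ∧ rle cs u γ) :
    pgen cs γ u = PresentedMonoid.of (posRels cs γ) ⟨u, hu⟩ := by
  rw [pgen, dif_pos hu]

theorem pgen_mul {x y : G} (hxy : rle cs (x * y) γ)
    (h : rlen cs (x * y) = rlen cs x + rlen cs y) :
    pgen cs γ x * pgen cs γ y = pgen cs γ (x * y) := by
  by_cases hx : x = 1
  · subst hx; rw [pgen_one, one_mul, one_mul]
  by_cases hy : y = 1
  · subst hy; rw [pgen_one, mul_one, mul_one]
  have hxy1 : x * y ≠ 1 := by
    intro h1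
    rw [h1, rlen_one] at h
    exact hx (eq_one_of_rlen cs (by omega))
  rw [pgen_of ⟨hx, rle_left_of_add hxy h⟩, pgen_of ⟨hy, rle_right_of_add hxy h⟩, pgen_of ⟨hxy1, hxy⟩]
  exact PresentedMonoid.mk_eq_mk_of_rel ⟨_, _, _, rfl, rfl, rfl, h.symm⟩

/-- `d` may be multiplied on the right by `a` inside `[1, γ]`, with additive length. -/
def Adm (cs : CoxeterSystem N G) (γ d a : G) : Prop :=
  rle cs (d * a) γ ∧ rlen cs (d * a) = rlen cs d + rlen cs a

theorem adm_iff {a d : G} (ha : rle cs a γ) : Adm cs γ d a ↔ rle cs d (γ * a⁻¹) := by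
  have h1 := (rle_iff_right cs).1 ha
  have e : γ * (d * a)⁻¹ = γ * a⁻¹ * d⁻¹ := by group
  have h2 := rlen_mul cs (γ * (d * a)⁻¹) (d * a)
  rw [inv_mul_cancel_right] at h2
  have h3 := rlen_mul cs d a
  rw [Adm, rle_iff_right cs, rle_iff_right cs, e]
  rw [e] at h2
  constructor
  · rintro ⟨h4, h5⟩; omega
  · intro h4; constructor <;> omega

/-- `d` is the longest suffix of `r` which may be multiplied by `a` inside `[1, γ]`. -/
structure IsHead (cs : CoxeterSystem N G) (γ r a d : G) : Prop where
  le : rle cs d r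
  adm : Adm cs γ d a
  max : ∀ e, rle cs e r → Adm cs γ e a → rle cs e d

/-- Existence of binary meets in the interval `[1, γ]`. -/
def HasMeets (cs : CoxeterSystem N G) (γ : G) : Prop :=
  ∀ α β, rle cs α γ → rle cs β γ →
    ∃ δ, rle cs δ α ∧ rle cs δ β ∧ ∀ ε, rle cs ε α → rle cs ε β → rle cs ε δ

theorem HasMeets.exists_head (hm : HasMeets cs γ) {r a : G} (hr : rle cs r γ) (ha : rle cs a γ) :
    ∃ d, IsHead cs γ r a d := by
  have h1 : rle cs (γ * a⁻¹) γ := by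
    rw [rle]
    have := (rle_iff_right cs).1 ha
    rw [this]; congr 2; group
  obtain ⟨d, h2, h3, h4⟩ := hm r (γ * a⁻¹) hr h1
  exact ⟨d, h2, (adm_iff ha).2 h3, fun e he he' => h4 e he ((adm_iff ha).1 he')⟩

open Classical in
/-- The longest suffix of `r` which may be multiplied by `a`. -/
noncomputable def head (cs : CoxeterSystem N G) (γ r a : G) : G :=
  if h : ∃ d, IsHead cs γ r a d then h.choose else 1

theorem HasMeets.head_spec (hm : HasMeets cs γ) {r a : G} (hr : rle cs r γ) (ha : rle cs a γ) :
    IsHead cs γ r a (head cs γ r a) := by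
  have h := hm.exists_head hr ha
  rw [head, dif_pos h]
  exact h.choose_spec

/-- Heads are compatible with additive factorisations `a * b` of an element of `[1, γ]`. -/
theorem IsHead.mul {r a b d₁ d₂ d₃ : G} (hab : rle cs (a * b) γ)
    (hlen : rlen cs (a * b) = rlen cs a + rlen cs b)
    (h₁ : IsHead cs γ r a d₁) (h₂ : IsHead cs γ (d₁ * a) b d₂) (h₃ : IsHead cs γ r (a * b) d₃) :
    d₂ = d₃ * a := by
  have l1 := h₁.adm.2
  have l2 := h₂.adm.2
  have l3 := h₃.adm.2
  have had2 : rle cs a d₂ := h₂.max a ((rle_mul_right_iff cs).2 l1) ⟨hab, hlen⟩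
  have e1 := (rle_iff_right cs).1 had2
  have e2 := (rle_iff_right cs).1 h₂.le
  rw [show d₁ * a * d₂⁻¹ = d₁ * (d₂ * a⁻¹)⁻¹ by group] at e2
  have hd' : rle cs (d₂ * a⁻¹) d₁ := by
    rw [rle_iff_right]; omega
  have hd'' : rle cs (d₂ * a⁻¹) d₃ := by
    refine h₃.max _ (rle_trans cs hd' h₁.le) ?_
    rw [Adm, show d₂ * a⁻¹ * (a * b) = d₂ * b by group]
    exact ⟨h₂.adm.1, by omega⟩
  -- the other comparison
  have t1 := rlen_mul cs d₃ a
  have t2 := rlen_mul cs (d₃ * a) b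
  have e3 : d₃ * (a * b) = d₃ * a * b := by group
  rw [e3] at l3
  have hadd : rle cs (d₃ * a * b) γ := e3 ▸ h₃.adm.1
  have l4 : rlen cs (d₃ * a) = rlen cs d₃ + rlen cs a := by omega
  have l5 : rlen cs (d₃ * a * b) = rlen cs (d₃ * a) + rlen cs b := by omega
  have h31 : rle cs d₃ d₁ := h₁.max _ h₃.le ⟨rle_left_of_add hadd l5, l4⟩
  have e4 := (rle_iff_right cs).1 h31
  have h5 : rle cs (d₃ * a) (d₁ * a) := by
    rw [rle_iff_right, show d₁ * a * (d₃ * a)⁻¹ = d₁ * d₃⁻¹ by group]; omega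
  have h6 := (rle_iff_right cs).1 (h₂.max _ h5 ⟨hadd, l5⟩)
  rw [show d₂ * (d₃ * a)⁻¹ = d₂ * a⁻¹ * d₃⁻¹ by group] at h6
  have h7 : rle cs d₃ (d₂ * a⁻¹) := by rw [rle_iff_right]; omega
  rw [rle_antisymm cs h7 hd'', inv_mul_cancel_right]

/-- States of the normal form automaton: a monoid element together with an element of `[1, γ]`. -/
abbrev NState (cs : CoxeterSystem N G) (γ : G) := PosMonoid cs γ × {r : G // rle cs r γ}

/-- Right multiplication of a state by an element of `[1, γ]`. -/
noncomputable def step (hm : HasMeets cs γ) (a : G) (ha : rle cs a γ) (s : NState cs γ) :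
    NState cs γ :=
  (s.1 * pgen cs γ (s.2 * (head cs γ s.2 a)⁻¹),
    ⟨head cs γ s.2 a * a, (hm.head_spec s.2.2 ha).adm.1⟩)

theorem pgen_split {r d : G} (hr : rle cs r γ) (hd : rle cs d r) :
    pgen cs γ (r * d⁻¹) * pgen cs γ d = pgen cs γ r := by
  have := (rle_iff_right cs).1 hd
  rw [pgen_mul (by rwa [inv_mul_cancel_right]) (by rw [inv_mul_cancel_right]; exact this),
    inv_mul_cancel_right]

theorem step_eval (hm : HasMeets cs γ) (a : G) (ha : rle cs a γ) (s : NState cs γ) :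
    (step hm a ha s).1 * pgen cs γ (step hm a ha s).2 =
      s.1 * pgen cs γ s.2 * pgen cs γ a := by
  have h := hm.head_spec s.2.2 ha
  rw [step]
  dsimp only
  rw [← pgen_mul h.adm.1 h.adm.2, ← pgen_split s.2.2 h.le]
  simp only [mul_assoc]

theorem step_mul (hm : HasMeets cs γ) {a b c : G} (ha : rle cs a γ) (hb : rle cs b γ)
    (hc : rle cs c γ) (hab : a * b = c) (hlen : rlen cs a + rlen cs b = rlen cs c)
    (s : NState cs γ) : step hm b hb (step hm a ha s) = step hm c hc s := by
  subst hab
  have h₁ := hm.head_spec s.2.2 ha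
  have h₂ := hm.head_spec (step hm a ha s).2.2 hb
  have h₃ := hm.head_spec s.2.2 hc
  have e := h₁.mul hc hlen.symm h₂ h₃
  have h31 : rle cs (head cs γ s.2 (a * b)) (head cs γ s.2 a) := by
    refine h₁.max _ h₃.le ?_
    have l3 := h₃.adm
    rw [Adm, ← mul_assoc] at l3
    have t1 := rlen_mul cs (head cs γ s.2 (a * b)) a
    have t2 := rlen_mul cs (head cs γ s.2 (a * b) * a) b
    have l4 : rlen cs (head cs γ s.2 (a * b) * a * b) =
      rlen cs (head cs γ s.2 (a * b) * a) + rlen cs b := by omega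
    exact ⟨rle_left_of_add l3.1 l4, by omega⟩
  refine Prod.ext ?_ (Subtype.ext ?_)
  · change s.1 * pgen cs γ (s.2 * (head cs γ s.2 a)⁻¹) *
      pgen cs γ (head cs γ s.2 a * a * (head cs γ (step hm a ha s).2 b)⁻¹) =
      s.1 * pgen cs γ (s.2 * (head cs γ s.2 (a * b))⁻¹)
    rw [e, mul_assoc]
    congr 1
    have e1 := (rle_iff_right cs).1 h₁.le
    have e2 := (rle_iff_right cs).1 h31
    have e3 := (rle_iff_right cs).1 h₃.le
    have e4 : (s.2 : G) * (head cs γ s.2 a)⁻¹ *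
        (head cs γ s.2 a * a * (head cs γ s.2 (a * b) * a)⁻¹) =
        s.2 * (head cs γ s.2 (a * b))⁻¹ := by group
    have e5 : head cs γ s.2 a * a * (head cs γ s.2 (a * b) * a)⁻¹ =
        head cs γ s.2 a * (head cs γ s.2 (a * b))⁻¹ := by group
    rw [pgen_mul, e4]
    · rw [e4]
      refine rle_trans cs ((rle_iff_right cs).2 ?_) s.2.2
      rw [mul_inv_rev, inv_inv, ← mul_assoc, rlen_conj, add_comm]; exact e3
    · rw [e4, e5]; omega
  · change head cs γ (step hm a ha s).2 b * b = head cs γ s.2 (a * b) * (a * b)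
    rw [e, mul_assoc]

/-- The right action of the positive monoid on states. -/
noncomputable def act (hm : HasMeets cs γ) :
    PosMonoid cs γ →* (Function.End (NState cs γ))ᵐᵒᵖ :=
  PresentedMonoid.lift (rels := posRels cs γ)
    (fun a => MulOpposite.op (step hm a.1 a.2.2) :
      NCGen cs γ → (Function.End (NState cs γ))ᵐᵒᵖ) (by
    rintro _ _ ⟨w₁, w₂, w₃, rfl, rfl, h, hlen⟩
    simp only [map_mul, FreeMonoid.lift_eval_of]
    refine congrArg MulOpposite.op (funext fun s => ?_)
    exact step_mul hm w₁.2.2 w₂.2.2 w₃.2.2 h hlen s)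

/-- The state reached from the trivial state. -/
noncomputable def nf (hm : HasMeets cs γ) (X : PosMonoid cs γ) : NState cs γ :=
  (act hm X).unop (1, ⟨1, one_rle cs γ⟩)

theorem nf_mul_of (hm : HasMeets cs γ) (X : PosMonoid cs γ) (a : NCGen cs γ) :
    nf hm (X * PresentedMonoid.of (posRels cs γ) a) = step hm a.1 a.2.2 (nf hm X) := by
  rw [nf, map_mul, MulOpposite.unop_mul]
  have : act hm (PresentedMonoid.of (posRels cs γ) a) =
      (MulOpposite.op (step hm a.1 a.2.2) : (Function.End (NState cs γ))ᵐᵒᵖ) := rfl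
  rw [this]
  rfl

theorem nf_eval (hm : HasMeets cs γ) (X : PosMonoid cs γ) :
    (nf hm X).1 * pgen cs γ (nf hm X).2 = X := by
  have hX : X ∈ Submonoid.closure (Set.range (PresentedMonoid.of (posRels cs γ))) := by
    rw [PresentedMonoid.closure_range_of]; trivial
  induction hX using Submonoid.closure_induction_right with
  | one =>
    rw [nf, map_one, MulOpposite.unop_one]
    change (1 : PosMonoid cs γ) * pgen cs γ 1 = 1
    rw [pgen_one, one_mul]
  | mul_right X _ y hy ih =>
    obtain ⟨a, rfl⟩ := hy
    rw [nf_mul_of, step_eval, ih, pgen_of a.2]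

/-- A common upper bound of minimal length is a least upper bound. -/
theorem HasMeets.exists_join (hm : HasMeets cs γ) {u w p : G} (hp : rle cs p γ)
    (hu : rle cs u p) (hw : rle cs w p) : ∃ j, IsIntervalLUB cs γ {u, w} j := by
  classical
  have hex : ∃ k, ∃ j, rle cs j γ ∧ rle cs u j ∧ rle cs w j ∧ rlen cs j = k :=
    ⟨_, p, hp, hu, hw, rfl⟩
  obtain ⟨j, hj, huj, hwj, hlen⟩ := Nat.find_spec hex
  refine ⟨j, hj, by simp [huj, hwj], fun r hr hx => ?_⟩
  obtain ⟨δ, h1, h2, h3⟩ := hm j r hj hr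
  have hmin := Nat.find_min' hex ⟨δ, rle_trans cs h1 hj, h3 u huj (hx u (by simp)),
    h3 w hwj (hx w (by simp)), rfl⟩
  rw [← hlen] at hmin
  have h4 := h1
  rw [rle] at h4
  have h5 : δ⁻¹ * j = 1 := eq_one_of_rlen cs (by omega)
  rwa [← inv_mul_eq_one.1 h5]

theorem HasMeets.suffix_join (hm : HasMeets cs γ) {u w : G} (hu : u ≠ 1 ∧ rle cs u γ)
    (hw : w ≠ 1 ∧ rle cs w γ) (X Y : PosMonoid cs γ)
    (hXY : X * PresentedMonoid.of (posRels cs γ) ⟨u, hu⟩ =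
      Y * PresentedMonoid.of (posRels cs γ) ⟨w, hw⟩) :
    ∃ e f : G, rle cs e γ ∧ rle cs f γ ∧ ∃ C : PosMonoid cs γ,
      X = C * pgen cs γ e ∧ Y = C * pgen cs γ f ∧
      e * u = f * w ∧ IsIntervalLUB cs γ {u, w} (e * u) := by
  have h := congrArg (nf hm) hXY
  rw [nf_mul_of, nf_mul_of] at h
  have hQ := congrArg Prod.fst h
  have hp := congrArg (fun s => (s.2 : G)) h
  have h1 := hm.head_spec (nf hm X).2.2 hu.2
  have h2 := hm.head_spec (nf hm Y).2.2 hw.2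
  simp only [step] at hQ hp
  set d₁ := head cs γ (nf hm X).2 u
  set d₂ := head cs γ (nf hm Y).2 w
  set Q := (nf hm X).1 * pgen cs γ ((nf hm X).2 * d₁⁻¹) with hQdef
  have hX : X = Q * pgen cs γ d₁ := by
    rw [hQdef, mul_assoc, pgen_split (nf hm X).2.2 h1.le, nf_eval]
  have hY : Y = Q * pgen cs γ d₂ := by
    rw [hQ, mul_assoc, pgen_split (nf hm Y).2.2 h2.le, nf_eval]
  have l1 := h1.adm.2
  have l2 := h2.adm.2
  obtain ⟨j, hj⟩ := hm.exists_join h1.adm.1 ((rle_mul_right_iff cs).2 l1)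
    (hp ▸ (rle_mul_right_iff cs).2 l2)
  have hjp : rle cs j (d₁ * u) := hj.2.2 _ h1.adm.1 (by
    rintro x (rfl | rfl)
    · exact (rle_mul_right_iff cs).2 l1
    · exact hp ▸ (rle_mul_right_iff cs).2 l2)
  have huj := (rle_iff_right cs).1 (hj.2.1 u (by simp))
  have hwj := (rle_iff_right cs).1 (hj.2.1 w (by simp))
  have hjp' := (rle_iff_right cs).1 hjp
  have suffix_le : ∀ x, rle cs x j → rle cs (j * x⁻¹) γ := fun x hx => by
    refine rle_trans cs ((rle_iff_right cs).2 ?_) hj.1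
    rw [mul_inv_rev, inv_inv, ← mul_assoc, rlen_conj, add_comm]
    exact (rle_iff_right cs).1 hx
  have e1 : d₁ * u * j⁻¹ * (j * u⁻¹) = d₁ := by group
  have e2 : d₁ * u * j⁻¹ * (j * w⁻¹) = d₂ := by rw [hp]; group
  have hd₁ : rle cs d₁ γ := rle_trans cs h1.le (nf hm X).2.2
  have hd₂ : rle cs d₂ γ := rle_trans cs h2.le (nf hm Y).2.2
  have hplen := congrArg (rlen cs) hp
  refine ⟨j * u⁻¹, j * w⁻¹, suffix_le u (hj.2.1 u (by simp)), suffix_le w (hj.2.1 w (by simp)),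
    Q * pgen cs γ (d₁ * u * j⁻¹), ?_, ?_, ?_, ?_⟩
  · rw [mul_assoc, pgen_mul, e1]
    · exact hX
    · rwa [e1]
    · rw [e1]; omega
  · rw [mul_assoc, pgen_mul, e2]
    · exact hY
    · rwa [e2]
    · rw [e2]; omega
  · group
  · rw [inv_mul_cancel_right]; exact hj

end Garside
section Representation

open Module Polynomial.Chebyshev

variable {ι : Type*} [Fintype ι] [DecidableEq ι] (N : CoxeterMatrix ι)

/-! ### The geometric representation of a Coxeter group -/

/-- The `i`-th simple coroot: the functional on `ι → ℝ` taking the value `-2 cos (π / N i j)` at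
the `j`-th basis vector. If `N i j = 0` the junk value `π / 0 = 0` gives `-2`, as it should. -/
noncomputable def coroot (i : ι) : (ι → ℝ) →ₗ[ℝ] ℝ :=
  Fintype.linearCombination ℝ fun j => -2 * Real.cos (Real.pi / N i j)

/-- The `i`-th simple root. -/
def sroot (i : ι) : ι → ℝ := Pi.single i 1

theorem coroot_sroot (i j : ι) : coroot N i (sroot j) = -2 * Real.cos (Real.pi / N i j) := by
  simp [coroot, sroot]

theorem coroot_self (i : ι) : coroot N i (sroot i) = 2 := by
  simp [coroot_sroot]

/-- For even `m = 2 (k + 1)`, this is the factor which makes `(s_i s_j) ^ m` trivial: in terms of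
`θ = 2π / m` it is `sin ((k + 1) θ) / sin θ = sin π / sin θ`. -/
theorem cheb_zero {m : ℕ} (hm : 3 ≤ m) {k : ℤ} (hk : (m : ℤ) = 2 * (k + 1)) :
    (S ℝ k).eval (2 * Real.cos (2 * (Real.pi / m))) = 0 := by
  have hm0 : (m : ℝ) ≠ 0 := by positivity
  have hm3 : (3 : ℝ) ≤ m := by exact_mod_cast hm
  have hs : 0 < Real.sin (2 * (Real.pi / m)) := by
    apply Real.sin_pos_of_pos_of_lt_pi
    · positivity
    · rw [← mul_div_assoc, div_lt_iff₀ (by positivity)]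
      nlinarith [Real.pi_pos]
  have h := S_two_mul_real_cos (2 * (Real.pi / m)) k
  have e : ((k : ℝ) + 1) * (2 * (Real.pi / m)) = Real.pi := by
    have : (m : ℝ) = 2 * (k + 1) := by exact_mod_cast hk
    field_simp
    linarith
  rw [e, Real.sin_pi] at h
  exact (mul_eq_zero.1 h).resolve_right hs.ne'

/-- For odd `m = 2 k + 1`, this is the factor which makes `(s_i s_j) ^ m` trivial: with
`θ = 2π / m` one has `(k + 1) θ = 2π - k θ`. -/
theorem cheb_add_zero {m : ℕ} (hm : 3 ≤ m) {k : ℤ} (hk : (m : ℤ) = 2 * k + 1) :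
    (S ℝ k).eval (2 * Real.cos (2 * (Real.pi / m))) +
      (S ℝ (k - 1)).eval (2 * Real.cos (2 * (Real.pi / m))) = 0 := by
  have hm0 : (m : ℝ) ≠ 0 := by positivity
  have hm3 : (3 : ℝ) ≤ m := by exact_mod_cast hm
  have hs : 0 < Real.sin (2 * (Real.pi / m)) := by
    apply Real.sin_pos_of_pos_of_lt_pi
    · positivity
    · rw [← mul_div_assoc, div_lt_iff₀ (by positivity)]
      nlinarith [Real.pi_pos]
  have h := S_two_mul_real_cos (2 * (Real.pi / m)) k
  have h' := S_two_mul_real_cos (2 * (Real.pi / m)) (k - 1)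
  have e : ((k : ℝ) + 1) * (2 * (Real.pi / m)) =
      2 * Real.pi - (((k - 1 : ℤ) : ℝ) + 1) * (2 * (Real.pi / m)) := by
    have : (m : ℝ) = 2 * k + 1 := by exact_mod_cast hk
    push_cast
    field_simp
    linarith
  rw [e, Real.sin_two_pi_sub] at h
  have h2 : ((S ℝ k).eval (2 * Real.cos (2 * (Real.pi / m))) +
      (S ℝ (k - 1)).eval (2 * Real.cos (2 * (Real.pi / m)))) *
        Real.sin (2 * (Real.pi / m)) = 0 := by
    rw [add_mul, h, h']; ring
  exact (mul_eq_zero.1 h2).resolve_right hs.ne'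

/-- The braid relations of the geometric representation. -/
theorem reflection_pow (i j : ι) :
    (reflection (coroot_self N i) * reflection (coroot_self N j)) ^ N i j = 1 := by
  by_cases hij : i = j
  · subst hij
    rw [N.diagonal, pow_one]
    ext1 z
    exact involutive_reflection (coroot_self N i) z
  ext1 z
  have hN : N i j ≠ 1 := N.off_diagonal i j hij
  have ht : 2 * Real.cos (2 * (Real.pi / N i j)) =
      coroot N i (sroot j) * coroot N j (sroot i) - 2 := by
    rw [coroot_sroot, coroot_sroot, N.symmetric j i, Real.cos_two_mul]; ring
  rw [reflection_mul_reflection_pow_apply _ _ _ _ _ ht]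
  change _ = z
  obtain h0 | h2 | h3 : N i j = 0 ∨ N i j = 2 ∨ 3 ≤ N i j := by omega
  · rw [h0]; simp
  · have h4 : (S ℝ (-1)) = 0 := S_neg_one ℝ
    have h5 : coroot N i (sroot j) = 0 := by rw [coroot_sroot, h2]; simp
    have h6 : coroot N j (sroot i) = 0 := by rw [coroot_sroot, N.symmetric j i, h2]; simp
    rw [h5, h6, h2]
    have h7 : (2 : ℝ) * (Real.pi / (2 : ℕ)) = Real.pi := by push_cast; ring
    rw [h7]
    norm_num
    module
  · obtain ⟨k, hk⟩ | ⟨k, hk⟩ := Int.even_or_odd (N i j : ℤ)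
    · have e1 : ((N i j : ℤ) - 2) / 2 = k - 1 := by omega
      have e2 : ((N i j : ℤ) - 1) / 2 = k - 1 := by omega
      rw [e1, e2, cheb_zero h3 (k := k - 1) (by omega)]
      simp
    · have e1 : ((N i j : ℤ) - 2) / 2 = k - 1 := by omega
      have e2 : ((N i j : ℤ) - 1) / 2 = k := by omega
      have e3 : ((N i j : ℤ) - 3) / 2 = k - 1 := by omega
      have e4 : (N i j : ℤ) / 2 = k := by omega
      rw [e1, e2, e3, e4, cheb_add_zero h3 hk]
      simp

variable {N} {G : Type*} [Group G] (cs : CoxeterSystem N G)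

theorem isLiftable_reflection :
    N.IsLiftable fun i => reflection (coroot_self N i) := reflection_pow N

/-- The geometric representation. -/
noncomputable def geom : G →* Module.End ℝ (ι → ℝ) :=
  LinearEquiv.automorphismGroup.toLinearMapMonoidHom.comp
    (cs.lift ⟨fun i => reflection (coroot_self N i), isLiftable_reflection⟩)

theorem geom_simple (i : ι) (x : ι → ℝ) :
    geom cs (cs.simple i) x = x - coroot N i x • sroot i := by
  rw [geom, MonoidHom.comp_apply, cs.lift_apply_simple isLiftable_reflection]
  exact reflection_apply x (coroot_self N i)

theorem geom_simple_self (i : ι) : geom cs (cs.simple i) (sroot i) = -sroot i := by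
  rw [geom_simple, coroot_self]; module

/-- The coefficients of the roots of a dihedral subsystem: with `c = cos θ` these are the numbers
`sin (k θ) / sin θ`. -/
noncomputable def dih (c : ℝ) : ℕ → ℝ
  | 0 => 0
  | 1 => 1
  | k + 2 => 2 * c * dih c (k + 1) - dih c k

theorem dih_nonneg {m k : ℕ} (hm : m ≠ 1) (hk : m = 0 ∨ k ≤ m) :
    0 ≤ dih (Real.cos (Real.pi / m)) k := by
  obtain rfl | hm0 := eq_or_ne m 0
  · have key : ∀ n, dih (Real.cos (Real.pi / (0 : ℕ))) n = n ∧
        dih (Real.cos (Real.pi / (0 : ℕ))) (n + 1) = n + 1 := by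
      intro n
      induction n with
      | zero => simp [dih]
      | succ n ih =>
        refine ⟨by rw [ih.2]; push_cast; ring, ?_⟩
        rw [dih, ih.1, ih.2]
        simp only [Nat.cast_zero, div_zero, Real.cos_zero]
        push_cast; ring
    rw [(key k).1]; positivity
  · have hkm : k ≤ m := hk.resolve_left hm0
    have key : ∀ n : ℕ, dih (Real.cos (Real.pi / m)) n * Real.sin (Real.pi / m) =
          Real.sin (n * (Real.pi / m)) ∧
        dih (Real.cos (Real.pi / m)) (n + 1) * Real.sin (Real.pi / m) =
          Real.sin ((n + 1 : ℕ) * (Real.pi / m)) := by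
      intro n
      induction n with
      | zero => simp [dih]
      | succ n ih =>
        refine ⟨ih.2, ?_⟩
        rw [dih, sub_mul, mul_assoc, ih.1, ih.2]
        have e1 : ((n + 1 + 1 : ℕ) : ℝ) * (Real.pi / m) =
          (n + 1 : ℕ) * (Real.pi / m) + Real.pi / m := by push_cast; ring
        have e2 : (n : ℝ) * (Real.pi / m) =
          (n + 1 : ℕ) * (Real.pi / m) - Real.pi / m := by push_cast; ring
        rw [e1, e2, Real.sin_add, Real.sin_sub]; ring
    have hm2 : (2 : ℝ) ≤ m := by exact_mod_cast (by omega : 2 ≤ m)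
    have hs : 0 < Real.sin (Real.pi / m) := by
      apply Real.sin_pos_of_pos_of_lt_pi
      · positivity
      · rw [div_lt_iff₀ (by positivity)]
        nlinarith [Real.pi_pos]
    have h := (key k).1
    have hk' : (k : ℝ) ≤ m := by exact_mod_cast hkm
    have h1 : 0 ≤ Real.sin (k * (Real.pi / m)) := by
      apply Real.sin_nonneg_of_nonneg_of_le_pi
      · positivity
      · rw [← mul_div_assoc, div_le_iff₀ (by positivity)]
        nlinarith [Real.pi_pos]
    rw [← h] at h1
    exact nonneg_of_mul_nonneg_left h1 hs

open CoxeterSystem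

theorem geom_alternatingWord (i j : ι) (k : ℕ) :
    geom cs (cs.wordProd (alternatingWord i j k)) (sroot i) =
      dih (Real.cos (Real.pi / N i j)) (if Even k then k + 1 else k) • sroot i +
      dih (Real.cos (Real.pi / N i j)) (if Even k then k else k + 1) • sroot j := by
  induction k with
  | zero => simp [alternatingWord, dih]
  | succ k ih =>
    rw [alternatingWord_succ', wordProd_cons, map_mul, Module.End.mul_apply, ih]
    by_cases hk : Even k
    · have hk' : ¬ Even (k + 1) := by rwa [Nat.even_add_one, not_not]
      simp only [hk, hk', if_true, if_false]
      rw [geom_simple, map_add, map_smul, map_smul, coroot_self, coroot_sroot, N.symmetric j i, dih]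
      simp only [smul_eq_mul]
      module
    · have hk' : Even (k + 1) := by rwa [Nat.even_add_one]
      simp only [hk, hk', if_true, if_false]
      rw [geom_simple, map_add, map_smul, map_smul, coroot_self, coroot_sroot, dih]
      simp only [smul_eq_mul]
      module

/-- If `w s_i` is longer than `w`, then `w` maps the simple root `α_i` to a non-negative
combination of simple roots. Induction on the length of `w`, splitting off a maximal alternating
word in `i` and another letter `j` which is a right descent of `w`. -/
theorem geom_nonneg (w : G) (i : ι) (hi : ¬ cs.IsRightDescent w i) :
    0 ≤ geom cs w (sroot i) := by
  induction hn : cs.length w using Nat.strong_induction_on generalizing w i with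
  | _ n ih =>
  subst hn
  by_cases hw : w = 1
  · subst hw
    rw [map_one, Module.End.one_apply, sroot]
    exact Pi.single_nonneg.2 zero_le_one
  obtain ⟨j, hj⟩ := cs.exists_rightDescent_of_ne_one hw
  have hij : i ≠ j := by rintro rfl; exact hi hj
  -- Factor `w` as `v` times an alternating word in `i, j` which is as long as possible.
  let P : ℕ → Prop := fun k => ∃ v, w = v * cs.wordProd (alternatingWord i j k) ∧
    cs.length w = cs.length v + k
  have hP1 : P 1 := by
    refine ⟨w * cs.simple j, ?_, ((cs.isRightDescent_iff).1 hj).symm⟩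
    simp [alternatingWord]
  classical
  have hbd : ∀ k, P k → k ≤ cs.length w := by rintro k ⟨v, -, h⟩; omega
  have hk1 := Nat.le_findGreatest (hbd 1 hP1) hP1
  obtain ⟨v, hv, hlen⟩ : P _ := Nat.findGreatest_spec (hbd 1 hP1) hP1
  have hmax : ∀ k, P k → k ≤ Nat.findGreatest P (cs.length w) := fun k hk =>
    Nat.le_findGreatest (hbd k hk) hk
  generalize Nat.findGreatest P (cs.length w) = k at hk1 hv hlen hmax
  have halt := cs.length_wordProd_le (alternatingWord i j k)
  have hmul := cs.length_mul_le v (cs.wordProd (alternatingWord i j k))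
  rw [← hv] at hmul
  rw [length_alternatingWord] at halt
  have hx : ¬ cs.IsRightDescent v (if Even k then j else i) := by
    intro hd
    have h1 : P (k + 1) := by
      refine ⟨v * cs.simple (if Even k then j else i), ?_, ?_⟩
      · rw [alternatingWord_succ', wordProd_cons, mul_assoc, simple_mul_simple_cancel_left, hv]
      · have := (cs.isRightDescent_iff).1 hd
        omega
    have := hmax _ h1
    omega
  have hy : ¬ cs.IsRightDescent v (if Even k then i else j) := by
    intro hd
    obtain ⟨k, rfl⟩ : ∃ k', k = k' + 1 := ⟨k - 1, by omega⟩
    have e : (if Even (k + 1) then i else j) = if Even k then j else i := by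
      by_cases h : Even k
      · rw [if_neg (by rwa [Nat.even_add_one, not_not]), if_pos h]
      · rw [if_pos (by rwa [Nat.even_add_one]), if_neg h]
    rw [e] at hd
    rw [alternatingWord_succ', wordProd_cons, ← mul_assoc] at hv
    have h1 := cs.length_mul_le (v * cs.simple (if Even k then j else i))
      (cs.wordProd (alternatingWord i j k))
    have h2 := cs.length_wordProd_le (alternatingWord i j k)
    rw [length_alternatingWord] at h2
    rw [← hv] at h1
    have := (cs.isRightDescent_iff).1 hd
    omega
  have hvi : ¬ cs.IsRightDescent v i ∧ ¬ cs.IsRightDescent v j := by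
    by_cases h : Even k
    · simp only [h, if_true] at hx hy; exact ⟨hy, hx⟩
    · simp only [h, if_false] at hx hy; exact ⟨hx, hy⟩
  -- An alternating word of length `N i j` could also be written ending in `i`, so that `i` would
  -- be a right descent of `w`.
  have hkm : N i j = 0 ∨ k + 1 ≤ N i j := by
    by_contra! hcon
    obtain hlt | heq : N i j < k ∨ k = N i j := by omega
    · have := cs.not_isReduced_alternatingWord i j hcon.1 hlt
      rw [CoxeterSystem.IsReduced, length_alternatingWord] at this
      omega
    · apply hi
      have hb := cs.wordProd_braidWord_eq i j
      rw [braidWord, braidWord, ← N.symmetric i j, ← heq] at hb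
      obtain ⟨k, rfl⟩ : ∃ k', k = k' + 1 := ⟨k - 1, by omega⟩
      rw [alternatingWord_succ j i, wordProd_concat] at hb
      have e : w * cs.simple i = v * cs.wordProd (alternatingWord i j k) := by
        rw [hv, hb, mul_assoc, simple_mul_simple_cancel_right]
      have h1 := cs.length_mul_le v (cs.wordProd (alternatingWord i j k))
      have h2 := cs.length_wordProd_le (alternatingWord i j k)
      rw [length_alternatingWord] at h2
      rw [IsRightDescent, e]
      omega
  have hN := N.off_diagonal i j hij
  have h1 := ih (cs.length v) (by omega) v i hvi.1 rfl
  have h2 := ih (cs.length v) (by omega) v j hvi.2 rfl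
  rw [hv, map_mul, Module.End.mul_apply, geom_alternatingWord, map_add, map_smul, map_smul]
  refine add_nonneg (smul_nonneg (dih_nonneg hN ?_) h1) (smul_nonneg (dih_nonneg hN ?_) h2) <;>
    split_ifs <;> omega

theorem geom_nonpos {w : G} {i : ι} (hi : cs.IsRightDescent w i) :
    geom cs w (sroot i) ≤ 0 := by
  have h := geom_nonneg cs (w * cs.simple i) i
    ((cs.isRightDescent_iff_not_isRightDescent_mul).1 hi)
  rw [map_mul, Module.End.mul_apply, geom_simple_self, map_neg] at h
  exact neg_nonneg.1 h

theorem geom_injective : Function.Injective (geom cs) := by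
  rw [injective_iff_map_eq_one]
  intro w hw
  by_contra hne
  obtain ⟨j, hj⟩ := cs.exists_rightDescent_of_ne_one hne
  have := geom_nonpos cs hj j
  rw [hw] at this
  simp [sroot] at this
  linarith

end Representation
theorem sroot_ne_zero {ι : Type*} [DecidableEq ι] (i : ι) : (sroot i : ι → ℝ) ≠ 0 := by
  simp [sroot]

section Form

variable {ι : Type*} [Fintype ι] [DecidableEq ι] {N : CoxeterMatrix ι}
  {G : Type*} [Group G] [Fintype G] (cs : CoxeterSystem N G)

/-! ### The root system of a finite Coxeter group -/

/-- An inner product on `ι → ℝ` invariant under the geometric representation, obtained by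
averaging. -/
noncomputable def ip : (ι → ℝ) →ₗ[ℝ] (ι → ℝ) →ₗ[ℝ] ℝ :=
  ∑ w : G, (dotProductBilin ℝ ℝ).compl₁₂ (geom cs w) (geom cs w)

theorem ip_apply (x y : ι → ℝ) : ip cs x y = ∑ w : G, geom cs w x ⬝ᵥ geom cs w y := by
  simp [ip, LinearMap.sum_apply, dotProductBilin]

theorem ip_comm (x y : ι → ℝ) : ip cs x y = ip cs y x := by
  rw [ip_apply, ip_apply]
  exact Finset.sum_congr rfl fun w _ => dotProduct_comm _ _

theorem ip_geom (g : G) (x y : ι → ℝ) : ip cs (geom cs g x) (geom cs g y) = ip cs x y := by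
  rw [ip_apply, ip_apply]
  refine Fintype.sum_equiv (Equiv.mulRight g) _ _ fun w => ?_
  simp only [Equiv.coe_mulRight, map_mul, Module.End.mul_apply]

theorem ip_pos {x : ι → ℝ} (hx : x ≠ 0) : 0 < ip cs x x := by
  have hnn : ∀ y : ι → ℝ, 0 ≤ y ⬝ᵥ y := fun y => Finset.sum_nonneg fun i _ => mul_self_nonneg _
  rw [ip_apply]
  refine Finset.sum_pos' (fun w _ => hnn _) ⟨1, Finset.mem_univ _, ?_⟩
  rw [map_one, Module.End.one_apply]
  exact lt_of_le_of_ne (hnn x) fun h => hx (dotProduct_self_eq_zero.1 h.symm)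

/-- The simple reflections are the orthogonal reflections in the simple roots for the invariant
inner product. -/
theorem coroot_mul_ip (i : ι) (x : ι → ℝ) :
    coroot N i x * ip cs (sroot i) (sroot i) = 2 * ip cs x (sroot i) := by
  have h := ip_geom cs (cs.simple i) x (sroot i)
  rw [geom_simple_self, geom_simple] at h
  simp only [map_neg, map_sub, map_smul, LinearMap.sub_apply, LinearMap.smul_apply,
    smul_eq_mul] at h
  linarith

theorem ip_sroot_nonpos {i j : ι} (hij : i ≠ j) : ip cs (sroot i) (sroot j) ≤ 0 := by
  have h := coroot_mul_ip cs j (sroot i)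
  rw [coroot_sroot] at h
  have hN := N.off_diagonal j i hij.symm
  have hc : 0 ≤ Real.cos (Real.pi / N j i) := by
    obtain h0 | h2 : N j i = 0 ∨ 2 ≤ N j i := by omega
    · rw [h0]; simp
    · have h2' : (2 : ℝ) ≤ N j i := by exact_mod_cast h2
      apply Real.cos_nonneg_of_mem_Icc
      constructor
      · have := Real.pi_pos
        have : 0 ≤ Real.pi / N j i := by positivity
        linarith
      · exact div_le_div_of_nonneg_left Real.pi_pos.le (by norm_num) h2'
  have := mul_nonneg hc (ip_pos cs (sroot_ne_zero j)).le
  linarith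

/-- The length of a simple root. -/
noncomputable def slen (i : ι) : ℝ := √(ip cs (sroot i) (sroot i))

theorem slen_pos (i : ι) : 0 < slen cs i := Real.sqrt_pos.2 (ip_pos cs (sroot_ne_zero i))

theorem slen_sq (i : ι) : slen cs i * slen cs i = ip cs (sroot i) (sroot i) :=
  Real.mul_self_sqrt (ip_pos cs (sroot_ne_zero i)).le

/-- The simple root normalised to length one. -/
noncomputable def uroot (i : ι) : ι → ℝ := (slen cs i)⁻¹ • sroot i

theorem slen_smul_uroot (i : ι) : slen cs i • uroot cs i = sroot i := by
  rw [uroot, smul_smul, mul_inv_cancel₀ (slen_pos cs i).ne', one_smul]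

theorem ip_uroot_self (i : ι) : ip cs (uroot cs i) (uroot cs i) = 1 := by
  have := (slen_pos cs i).ne'
  simp only [uroot, map_smul, LinearMap.smul_apply, smul_eq_mul, ← slen_sq]
  field_simp

theorem geom_simple_uroot (i : ι) (x : ι → ℝ) :
    geom cs (cs.simple i) x = x - (2 * ip cs x (uroot cs i)) • uroot cs i := by
  have h0 := (slen_pos cs i).ne'
  rw [geom_simple, uroot, map_smul, smul_smul]
  congr 2
  have h := coroot_mul_ip cs i x
  rw [← slen_sq] at h
  rw [smul_eq_mul]
  field_simp
  linarith

/-- The roots: the images of the normalised simple roots under the group. -/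
def roots : Set (ι → ℝ) := Set.range fun p : G × ι => geom cs p.1 (uroot cs p.2)

/-- Every root is positive or negative. -/
theorem roots_sign {x : ι → ℝ} (hx : x ∈ roots cs) : 0 ≤ x ∨ 0 ≤ -x := by
  obtain ⟨⟨w, i⟩, rfl⟩ := hx
  have h0 : 0 ≤ (slen cs i)⁻¹ := (inv_pos.2 (slen_pos cs i)).le
  simp only [uroot, map_smul]
  by_cases h : cs.IsRightDescent w i
  · right
    rw [← smul_neg]
    exact smul_nonneg h0 (neg_nonneg.2 (geom_nonpos cs h))
  · exact Or.inl (smul_nonneg h0 (geom_nonneg cs w i h))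

/-- The matrix of the form `euler`: triangular for the ordering of the simple roots given by the
list `l`, with twice the invariant form off the diagonal. -/
noncomputable def eulerMatrix (l : List ι) : Matrix ι ι ℝ := fun i j =>
  if l.idxOf i < l.idxOf j then 0
  else if i = j then ip cs (sroot i) (sroot i) else 2 * ip cs (sroot i) (sroot j)

/-- The non-symmetric form attached to an ordering `l` of the simple roots: it vanishes on
`(α_i, α_j)` if `i` precedes `j` in `l`, and its symmetrisation is twice the invariant form. -/
noncomputable def euler (l : List ι) : (ι → ℝ) →ₗ[ℝ] (ι → ℝ) →ₗ[ℝ] ℝ :=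
  Matrix.toLinearMap₂' ℝ (eulerMatrix cs l)

theorem euler_sroot (l : List ι) (i j : ι) :
    euler cs l (sroot i) (sroot j) = eulerMatrix cs l i j := by
  rw [euler, Matrix.toLinearMap₂'_apply']
  simp [sroot]

theorem euler_symm {l : List ι} (hl : ∀ i, i ∈ l) (x y : ι → ℝ) :
    euler cs l x y + euler cs l y x = 2 * ip cs x y := by
  have h : euler cs l + (euler cs l).flip = (2 : ℝ) • ip cs := by
    refine (Pi.basisFun ℝ ι).ext fun i => (Pi.basisFun ℝ ι).ext fun j => ?_
    simp only [Pi.basisFun_apply, LinearMap.add_apply, LinearMap.flip_apply, LinearMap.smul_apply,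
      smul_eq_mul]
    change euler cs l (sroot i) (sroot j) + euler cs l (sroot j) (sroot i) =
      2 * ip cs (sroot i) (sroot j)
    rw [euler_sroot, euler_sroot, eulerMatrix, eulerMatrix]
    by_cases hij : i = j
    · subst hij
      simp only [lt_irrefl, if_false, if_true]; ring
    · have hne : l.idxOf i ≠ l.idxOf j := fun h => hij ((List.idxOf_inj (hl i)).1 h)
      rw [if_neg hij, if_neg (Ne.symm hij)]
      obtain h | h := lt_or_gt_of_ne hne
      · rw [if_pos h, if_neg h.not_gt, ip_comm]; ring
      · rw [if_neg h.not_gt, if_pos h]; ring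
  have := LinearMap.congr_fun (LinearMap.congr_fun h x) y
  simpa using this

theorem euler_self {l : List ι} (hl : ∀ i, i ∈ l) (x : ι → ℝ) :
    euler cs l x x = ip cs x x := by
  have := euler_symm cs hl x x
  linarith

theorem geom_isometry {l : List ι} (hl : ∀ i, i ∈ l) (g : G) (x y : ι → ℝ) :
    euler cs l (geom cs g x) (geom cs g y) + euler cs l (geom cs g y) (geom cs g x) =
      euler cs l x y + euler cs l y x := by
  rw [euler_symm cs hl, euler_symm cs hl, ip_geom]

theorem geom_simple_eq {l : List ι} (hl : ∀ i, i ∈ l) (i : ι) :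
    geom cs (cs.simple i) = rf (euler cs l) (uroot cs i) := by
  refine LinearMap.ext fun x => ?_
  rw [geom_simple_uroot, rf_apply, euler_symm cs hl, ip_comm]

theorem geom_conj {l : List ι} (hl : ∀ i, i ∈ l) (w : G) (i : ι) :
    geom cs (w * cs.simple i * w⁻¹) = rf (euler cs l) (geom cs w (uroot cs i)) := by
  refine LinearMap.ext fun x => ?_
  have hx : x = geom cs w (geom cs w⁻¹ x) := by
    rw [← Module.End.mul_apply, ← map_mul, mul_inv_cancel, map_one, Module.End.one_apply]
  conv_rhs => rw [hx]
  rw [rf_conj (geom_isometry cs hl w), ← geom_simple_eq cs hl, map_mul, map_mul]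
  rfl

theorem exists_reflection {l : List ι} (hl : ∀ i, i ∈ l) {a : ι → ℝ} (ha : a ∈ roots cs) :
    ∃ t, cs.IsReflection t ∧ geom cs t = rf (euler cs l) a := by
  obtain ⟨⟨w, i⟩, rfl⟩ := ha
  exact ⟨_, ⟨w, i, rfl⟩, geom_conj cs hl w i⟩

theorem roots_datum {l : List ι} (hl : ∀ i, i ∈ l) : IsRootDatum (euler cs l) (roots cs) where
  pos x hx := by rw [euler_self cs hl]; exact ip_pos cs hx
  unit x hx := by
    obtain ⟨⟨w, i⟩, rfl⟩ := hx
    rw [euler_self cs hl, ip_geom, ip_uroot_self]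
  finite := Set.finite_range _
  rf_mem a ha x hx := by
    obtain ⟨t, -, ht⟩ := exists_reflection cs hl ha
    obtain ⟨⟨w, i⟩, rfl⟩ := hx
    rw [← ht]
    exact ⟨(t * w, i), by simp only [map_mul, Module.End.mul_apply]⟩
  finite_order L hL := by
    have : ∃ g, geom cs g = wl (euler cs l) L := by
      induction L with
      | nil => exact ⟨1, by rw [map_one, wl_nil]⟩
      | cons a L ih =>
        obtain ⟨g, hg⟩ := ih fun x hx => hL x (by simp [hx])
        obtain ⟨t, -, ht⟩ := exists_reflection cs hl (hL a (by simp))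
        exact ⟨t * g, by rw [map_mul, wl_cons, hg, ht]⟩
    obtain ⟨g, hg⟩ := this
    exact ⟨orderOf g, orderOf_pos g, by rw [← hg, ← map_pow, pow_orderOf_eq_one, map_one]⟩

theorem eq_sum_uroot (x : ι → ℝ) : x = ∑ i, (x i * slen cs i) • uroot cs i := by
  simp only [mul_smul, slen_smul_uroot]
  conv_lhs => rw [pi_eq_sum_univ' x]
  rfl

theorem uroot_mem {l : List ι} (hl : ∀ i, i ∈ l) (i : ι) : uroot cs i ∈ l.map (uroot cs) :=
  List.mem_map_of_mem (hl i)

theorem mem_cone_of_nonneg {l : List ι} (hl : ∀ i, i ∈ l) {x : ι → ℝ} (hx : 0 ≤ x) :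
    x ∈ cone (l.map (uroot cs)) := by
  rw [eq_sum_uroot cs x]
  exact sum_mem fun i _ => cone_smul (mul_nonneg (hx i) (slen_pos cs i).le)
    (mem_cone (uroot_mem cs hl i))

theorem simple_fullStr {l : List ι} (hl : ∀ i, i ∈ l) (hn : l.Nodup) :
    FullStr (euler cs l) (roots cs) (l.map (uroot cs)) where
  mem a ha := by
    obtain ⟨i, -, rfl⟩ := List.mem_map.1 ha
    exact ⟨(1, i), by simp only [map_one, Module.End.one_apply]⟩
  pw := by
    rw [List.pairwise_map]
    have hpw : l.Pairwise fun i j => l.idxOf i < l.idxOf j := by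
      rw [List.pairwise_iff_getElem]
      intro p q hp hq hpq
      rwa [hn.idxOf_getElem, hn.idxOf_getElem]
    refine hpw.imp fun {i j} h => ?_
    have hij : j ≠ i := by rintro rfl; exact lt_irrefl _ h
    have hi := (inv_pos.2 (slen_pos cs i)).le
    have hj := (inv_pos.2 (slen_pos cs j)).le
    simp only [uroot, map_smul, LinearMap.smul_apply, euler_sroot, smul_eq_mul]
    rw [eulerMatrix, if_pos h, eulerMatrix, if_neg h.not_gt, if_neg hij]
    refine ⟨by ring, mul_nonpos_of_nonneg_of_nonpos hi (mul_nonpos_of_nonneg_of_nonpos hj ?_)⟩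
    have := ip_sroot_nonpos cs hij
    linarith
  coh x hx _ := (roots_sign cs hx).imp (mem_cone_of_nonneg cs hl) (mem_cone_of_nonneg cs hl)
  top x := by
    rw [eq_sum_uroot cs x]
    exact sum_mem fun i _ => Submodule.smul_mem _ _ (mem_lspan (uroot_mem cs hl i))

theorem geom_wordProd {l : List ι} (hl : ∀ i, i ∈ l) (L : List ι) :
    geom cs (cs.wordProd L) = wl (euler cs l) (L.map (uroot cs)) := by
  induction L with
  | nil => rw [CoxeterSystem.wordProd_nil, map_one]; rfl
  | cons i L ih =>
    rw [CoxeterSystem.wordProd_cons, map_mul, ih, List.map_cons, wl_cons, geom_simple_eq cs hl]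

theorem simple_model {l : List ι} (hl : ∀ i, i ∈ l) (hn : l.Nodup) :
    Model cs (cs.wordProd l) (euler cs l) (roots cs) (geom cs) (l.map (uroot cs)) where
  inj := geom_injective cs
  refl t ht := by
    obtain ⟨w, i, rfl⟩ := ht
    exact ⟨_, ⟨(w, i), rfl⟩, geom_conj cs hl w i⟩
  root a ha := exists_reflection cs hl ha
  datum := roots_datum cs hl
  full := simple_fullStr cs hl hn
  cox := geom_wordProd cs hl l

end Form

theorem rle_conj {ι G : Type*} [Group G] {N : CoxeterMatrix ι} (cs : CoxeterSystem N G)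
    (v x y : G) :
    rle cs (v * x * v⁻¹) (v * y * v⁻¹) ↔ rle cs x y := by
  have e : (v * x * v⁻¹)⁻¹ * (v * y * v⁻¹) = v * (x⁻¹ * y) * v⁻¹ := by group
  rw [rle, rle, e, rlen_conj, rlen_conj, rlen_conj]

/-- The interval below a Coxeter element has binary meets. Conjugation preserves reflection length,
so the Coxeter element may be taken to be a product of the simple reflections. -/
theorem hasMeets_of_isCoxeterElement {ι G : Type*} [Fintype ι] [Group G] [Fintype G]
    {N : CoxeterMatrix ι} {cs : CoxeterSystem N G} {γ : G} (hγ : IsCoxeterElement cs γ) :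
    HasMeets cs γ := by
  classical
  obtain ⟨v, l, hn, hl, rfl⟩ := hγ
  have conj_surj : ∀ x : G, ∃ y, x = v * y * v⁻¹ := fun x => ⟨v⁻¹ * x * v, by group⟩
  intro α β hα hβ
  obtain ⟨α, rfl⟩ := conj_surj α
  obtain ⟨β, rfl⟩ := conj_surj β
  rw [rle_conj] at hα hβ
  obtain ⟨δ, h1, h2, h3⟩ := (simple_model cs hl hn).meet hα hβ
  refine ⟨v * δ * v⁻¹, (rle_conj cs _ _ _).2 h1, (rle_conj cs _ _ _).2 h2, fun ε hε1 hε2 => ?_⟩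
  obtain ⟨ε, rfl⟩ := conj_surj ε
  rw [rle_conj] at *
  exact h3 ε hε1 hε2

end NCLattice

/-- Right suffix lemma in the positive monoid: if `A⟨u⟩ = B⟨w⟩` then `A = C⟨e⟩`,
`B = C⟨f⟩` with `eu = fw = u ∨ w`. -/
theorem right_suffix_join [Fintype B] [Fintype W] (cs : CoxeterSystem M W) (γ : W)
    (hγ : IsCoxeterElement cs γ) (u w : W)
    (hu : u ≠ 1 ∧ rle cs u γ) (hw : w ≠ 1 ∧ rle cs w γ)
    (A C' : PosMonoid cs γ)
    (hAB : A * PresentedMonoid.of (posRels cs γ) ⟨u, hu⟩ =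
           C' * PresentedMonoid.of (posRels cs γ) ⟨w, hw⟩) :
    ∃ e f : W, rle cs e γ ∧ rle cs f γ ∧ ∃ C : PosMonoid cs γ,
      A = C * pgen cs γ e ∧ C' = C * pgen cs γ f ∧
      e * u = f * w ∧ IsIntervalLUB cs γ {u, w} (e * u) := by
  exact (NCLattice.hasMeets_of_isCoxeterElement hγ).suffix_join hu hw A C' hAB
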